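/- Let K be a field, let d be a natural number, and let G be a finitely generated subgroup of the general linear group GL(d, K). Then G has bVCyc if and only if G is virtually cyclic. (In particular, a finitely generated linear group has BVC if and only if it is virtually cyclic.) -/

import Mathlib

/-- A group is *virtually cyclic* if it has a cyclic subgroup of finite index. -/
def VirtuallyCyclic (G : Type*) [Group G] : Prop :=
  ∃ H : Subgroup G, IsCyclic H ∧ H.FiniteIndex

/-- A group has *bVCyc* if there are finitely many virtually cyclic subgroups such that
every element lies in a conjugate of one of them. -/
def bVCyc (G : Type*) [Group G] : Prop :=
  ∃ 𝒱 : Finset (Subgroup G), (∀ V ∈ 𝒱, VirtuallyCyclic V) ∧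
    ∀ g : G, ∃ V ∈ 𝒱, ∃ x : G, x * g * x⁻¹ ∈ V

/-- A group has *BVC* if there are finitely many virtually cyclic subgroups such that
every virtually cyclic subgroup is contained in a conjugate of one of them. -/
def BVC (G : Type*) [Group G] : Prop :=
  ∃ 𝒱 : Finset (Subgroup G), (∀ V ∈ 𝒱, VirtuallyCyclic V) ∧
    ∀ W : Subgroup G, VirtuallyCyclic W →
      ∃ V ∈ 𝒱, ∃ x : G, ∀ w ∈ W, x * w * x⁻¹ ∈ V

/-- A group has *bCyc* if there are finitely many elements g₁, …, gₙ such that every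
element is conjugate to a power of some gᵢ. -/
def bCyc (G : Type*) [Group G] : Prop :=
  ∃ s : Finset G, ∀ g : G, ∃ a ∈ s, ∃ k : ℤ, IsConj g (a ^ k)

/-- An element is *primitive* if it cannot be written as a proper power. -/
def Primitive {G : Type*} [Group G] (g : G) : Prop :=
  ∀ (h : G) (n : ℤ), g = h ^ n → n = 1 ∨ n = -1

/-!
If `G` has bVCyc, then there are a finite set `C` and an `N > 0` such that the `N`-th power of
every element is conjugate to a power of some `c ∈ C`. This is the form in which bVCyc is used for
linear groups.

*Eigenvalues of commutators.* Let `G₀` be a subgroup of finite index contained in all subgroups of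
index at most `d ^ d`. Let `G` act on `L ^ d`, where `L` is an algebraically closed normed field,
and suppose that `g ∈ ⁅G₀, G₀⁆` has an eigenvalue of modulus greater than `1`. Then `g⁻¹` is
proximal on alternating forms of a suitable degree `k`: its normalised powers converge to a
projection `w ↦ l(w) v` of rank one. Comparing the traces of the words `g ^ a x g ^ b y` with
those of the powers of elements of `C`, only boundedly many of which have a given order of
magnitude, one finds that the coefficient `χ x = l(x v)` is multiplicative where it does not
vanish. So `{χ ≠ 0}` is a subgroup of index at most `d ^ k` on which `χ` is a character with `χ g`
of modulus different from `1`, which contradicts `g ∈ ⁅G₀, G₀⁆`. As an element that is not a root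
of unity has a place where its absolute value is not `1`, and a finitely generated ring of
definition of `G` specializes at this place, all eigenvalues on `⁅G₀, G₀⁆` are roots of unity.
Since `C` is finite, there is an `E > 0` such that `g ^ E` is unipotent for all `g ∈ ⁅G₀, G₀⁆`.

*Solvability.* Reduce a finitely generated ring of definition modulo a maximal ideal `m` that does
not contain `E`. If a matrix `x` is congruent to `1` modulo `m` and `x ^ E` is unipotent, then so is
`x`, because `1 + x + ⋯ + x ^ (E - 1)` is congruent to `E` and hence is not a zero divisor.
Therefore `⁅G₁, G₁⁆` consists of unipotent elements for some subgroup `G₁` of finite index. Modulo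
every maximal ideal, a unipotent group is a `p`-group of derived length at most `d`, so `G₁` is
solvable.

*Solvable groups.* Induction on the derived length reduces to extensions of an infinite cyclic
group by an abelian group `M`, on which a generator acts by `t`. Here bVCyc forces
`|M ⧸ (t ^ n - 1) M| ≤ C n` for all `n > 0`. If the `ℤ[t, t⁻¹]`-module `M` were infinite, then some
prime ideal containing its annihilator would have an infinite quotient; it lies in many maximal
ideals, whose residue fields are finite and contribute too much to `M ⧸ (t ^ n - 1) M` for well
chosen `n`.
-/

/-! ### Virtually cyclic groups and bVCyc -/

namespace VirtuallyCyclic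

variable {A B : Type*} [Group A] [Group B]

lemma of_injective (f : A →* B) (hf : Function.Injective f) (h : VirtuallyCyclic B) :
    VirtuallyCyclic A := by
  obtain ⟨H, _, hH⟩ := h
  refine ⟨H.comap f, isCyclic_of_injective (f.subgroupComap H) fun x y hxy => ?_, ⟨?_⟩⟩
  · exact Subtype.ext (hf (congrArg Subtype.val hxy))
  · rw [Subgroup.index_comap]
    exact Subgroup.FiniteIndex.index_ne_zero

lemma of_surjective (f : A →* B) (hf : Function.Surjective f) (h : VirtuallyCyclic A) :
    VirtuallyCyclic B := by
  obtain ⟨H, _, hH⟩ := h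
  refine ⟨H.map f, isCyclic_of_surjective (f.subgroupMap H) (f.subgroupMap_surjective H), ⟨?_⟩⟩
  exact ne_zero_of_dvd_ne_zero hH.index_ne_zero (H.index_map_dvd hf)

lemma of_finiteIndex (H : Subgroup A) [H.FiniteIndex] (h : VirtuallyCyclic H) :
    VirtuallyCyclic A := by
  obtain ⟨C, _, hC⟩ := h
  refine ⟨C.map H.subtype, isCyclic_of_surjective (H.subtype.subgroupMap C)
    (H.subtype.subgroupMap_surjective C), ⟨?_⟩⟩
  rw [Subgroup.index_map_subtype]
  exact mul_ne_zero hC.index_ne_zero Subgroup.FiniteIndex.index_ne_zero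

lemma bVCyc (h : VirtuallyCyclic A) : bVCyc A :=
  ⟨{⊤}, by simpa using h.of_injective (Subgroup.subtype ⊤) Subtype.val_injective,
    fun _ => ⟨⊤, by simp, 1, trivial⟩⟩

lemma exists_pow_mem_zpowers (h : VirtuallyCyclic A) :
    ∃ (c : A) (N : ℕ), 0 < N ∧ ∀ g : A, g ^ N ∈ Subgroup.zpowers c := by
  obtain ⟨H, hcyc, hH⟩ := h
  obtain ⟨c, rfl⟩ := Subgroup.isCyclic_iff_exists_zpowers_eq_top H |>.1 hcyc
  refine ⟨c, (Subgroup.zpowers c).index.factorial, Nat.factorial_pos _, fun g => ?_⟩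
  obtain ⟨n, hn0, hn, hmem⟩ := Subgroup.exists_pow_mem_of_index_ne_zero hH.index_ne_zero g
  obtain ⟨j, hj⟩ := Nat.dvd_factorial hn0 hn
  rw [hj, pow_mul]
  exact pow_mem hmem j

end VirtuallyCyclic

/-- Up to conjugation, the `N`-th power of every group element is a power of one of the finitely
many elements of `C`. This is the form in which bVCyc is exploited for linear groups. -/
structure CoversPowers {G : Type*} [Group G] (C : Finset G) (N : ℕ) : Prop where
  pos : 0 < N
  exists_isConj : ∀ g : G, ∃ c ∈ C, ∃ k : ℤ, IsConj (c ^ k) (g ^ N)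

namespace bVCyc

variable {G : Type*} [Group G]

lemma of_surjective {Q : Type*} [Group Q] (f : G →* Q) (hf : Function.Surjective f)
    (h : bVCyc G) : bVCyc Q := by
  classical
  obtain ⟨S, hS, hcover⟩ := h
  refine ⟨S.image (Subgroup.map f), ?_, fun q => ?_⟩
  · simp only [Finset.forall_mem_image]
    exact fun V hV => (hS V hV).of_surjective (f.subgroupMap V) (f.subgroupMap_surjective V)
  · obtain ⟨g, rfl⟩ := hf q
    obtain ⟨V, hV, x, hx⟩ := hcover g
    exact ⟨V.map f, Finset.mem_image_of_mem _ hV, f x, _, hx, by simp⟩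

/-- Each `V` is replaced by the traces on `H` of its conjugates by representatives of the cosets
of `H`. -/
lemma of_finiteIndex (H : Subgroup G) [H.FiniteIndex] (h : bVCyc G) : bVCyc H := by
  classical
  obtain ⟨S, hS, hcover⟩ := h
  have := Fintype.ofFinite (G ⧸ H)
  let conjOut (q : G ⧸ H) : H →* G := (MulAut.conj q.out).toMonoidHom.comp H.subtype
  refine ⟨(S ×ˢ Finset.univ).image fun p => p.1.comap (conjOut p.2), ?_, fun g => ?_⟩
  · simp only [Finset.forall_mem_image, Finset.mem_product, Finset.mem_univ, and_true, Prod.forall]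
    refine fun V q hV => (hS V hV).of_injective ((conjOut q).subgroupComap V) fun x y hxy => ?_
    exact Subtype.ext <| Subtype.ext <| (MulAut.conj q.out).injective (congrArg Subtype.val hxy)
  · obtain ⟨V, hV, x, hx⟩ := hcover g
    obtain ⟨y, hy⟩ := QuotientGroup.mk_out_eq_mul H x
    refine ⟨V.comap (conjOut (x : G ⧸ H)), Finset.mem_image_of_mem _ (by simp [hV] :
      (V, (x : G ⧸ H)) ∈ S ×ˢ Finset.univ), y⁻¹, ?_⟩
    have hconj : conjOut (x : G ⧸ H) (y⁻¹ * g * y⁻¹⁻¹) = x * g * x⁻¹ := by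
      simp only [conjOut, MonoidHom.comp_apply, MulEquiv.toMonoidHom_eq_coe, MonoidHom.coe_coe,
        MulAut.conj_apply, hy, Subgroup.subtype_apply, Subgroup.coe_mul, Subgroup.coe_inv]
      group
    rwa [Subgroup.mem_comap, hconj]

lemma exists_coversPowers (h : bVCyc G) : ∃ (C : Finset G) (N : ℕ), CoversPowers C N := by
  classical
  obtain ⟨S, hS, hcover⟩ := h
  choose c N hN hmem using fun V hV => (hS V hV).exists_pow_mem_zpowers
  refine ⟨S.attach.image fun V => (c V.1 V.2 : G), ∏ V : S, N V.1 V.2,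
    Finset.prod_pos fun V _ => hN V.1 V.2, fun g => ?_⟩
  obtain ⟨V, hV, x, hx⟩ := hcover g
  obtain ⟨j, hj⟩ :=
    Finset.dvd_prod_of_mem (fun V : S => N V.1 V.2) (Finset.mem_univ ⟨V, hV⟩)
  obtain ⟨k, hk⟩ := Subgroup.mem_zpowers_iff.1 (pow_mem (hmem V hV ⟨_, hx⟩) j)
  refine ⟨c V hV, Finset.mem_image_of_mem (fun V : S => (c V.1 V.2 : G)) (S.mem_attach ⟨V, hV⟩), k,
    isConj_iff.2 ⟨x⁻¹, ?_⟩⟩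
  rw [← pow_mul, ← hj] at hk
  have hk' := congrArg Subtype.val hk
  simp only [SubgroupClass.coe_zpow, SubmonoidClass.mk_pow, conj_pow] at hk'
  rw [hk']
  group

/-- In a commutative group conjugation is trivial, so the group is a finite union of virtually
cyclic subgroups, one of which has finite index by B. H. Neumann's lemma. -/
lemma virtuallyCyclic_of_comm {A : Type*} [CommGroup A] (h : bVCyc A) : VirtuallyCyclic A := by
  obtain ⟨S, hS, hcover⟩ := h
  obtain ⟨V, hV, hfin⟩ := Subgroup.exists_finiteIndex_of_leftCoset_cover (H := id)
    (g := fun _ : Subgroup A => 1) (s := S) (by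
      refine Set.eq_univ_of_forall fun a => ?_
      obtain ⟨V, hV, x, hx⟩ := hcover a
      rw [mul_comm x a, mul_inv_cancel_right] at hx
      simpa using ⟨V, hV, hx⟩)
  rw [id_eq] at hfin
  exact (hS V hV).of_finiteIndex V

end bVCyc

section FinitelyGenerated

variable {G : Type*} [Group G]

lemma finite_monoidHom_of_fg (h : Group.FG G) (Q : Type*) [Monoid Q] [Finite Q] :
    Finite (G →* Q) := by
  obtain ⟨S, hS⟩ := Group.fg_def.1 h
  refine Finite.of_injective (fun (f : G →* Q) (s : S) => f s) fun f g hfg => ?_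
  exact MonoidHom.eq_of_eqOn_dense hS fun x hx => congrFun hfg ⟨x, hx⟩

lemma exists_finiteIndex_le_of_index_le (h : Group.FG G) (n : ℕ) :
    ∃ G₀ : Subgroup G, G₀.FiniteIndex ∧ ∀ M : Subgroup G, M.index ≠ 0 → M.index ≤ n → G₀ ≤ M := by
  have (m : Fin (n + 1)) := finite_monoidHom_of_fg h (Equiv.Perm (Fin m))
  refine ⟨⨅ p : Σ m : Fin (n + 1), G →* Equiv.Perm (Fin m), p.2.ker,
    Subgroup.finiteIndex_iInf fun p => inferInstance, fun M h0 hn => ?_⟩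
  have : M.FiniteIndex := ⟨h0⟩
  let e : G ⧸ M ≃ Fin M.index := Finite.equivFinOfCardEq rfl
  let f : G →* Equiv.Perm (Fin M.index) :=
    e.permCongrHom.toMonoidHom.comp (MulAction.toPermHom G (G ⧸ M))
  calc _ ≤ f.ker := iInf_le (fun p : Σ m : Fin (n + 1), G →* Equiv.Perm (Fin m) => p.2.ker)
        ⟨⟨M.index, by omega⟩, f⟩
    _ = M.normalCore := by
        rw [Subgroup.normalCore_eq_ker]
        ext g
        simp [f, MonoidHom.mem_ker]
    _ ≤ M := M.normalCore_le

end FinitelyGenerated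

/-! ### Finitely generated commutative rings -/

lemma isJacobsonRing_of_jacobson_bot {R : Type*} [CommRing R] [Ring.DimensionLEOne R]
    (h : Ideal.jacobson (⊥ : Ideal R) = ⊥) : IsJacobsonRing R := by
  refine isJacobsonRing_iff_prime_eq.2 fun P hP => ?_
  rcases eq_or_ne P ⊥ with rfl | h0
  · exact h
  · have := hP.isMaximal h0
    exact Ideal.jacobson_eq_self_of_isMaximal

instance isJacobsonRing_int : IsJacobsonRing ℤ := by
  refine isJacobsonRing_of_jacobson_bot ((Submodule.eq_bot_iff _).2 fun x hx => ?_)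
  rcases Int.isUnit_iff.1 (Ideal.mem_jacobson_bot.1 hx (3 * x)) with h | h
  · simpa using h
  · nlinarith

lemma finite_of_finiteType_int (k : Type*) [Field k] [Algebra.FiniteType ℤ k] : Finite k := by
  have : Module.Finite ℤ k := finite_of_finite_type_of_isJacobsonRing ℤ k
  have hinj : ¬ Function.Injective (algebraMap ℤ k) := fun hinj =>
    Int.not_isField (isField_of_isIntegral_of_isField hinj (Field.toIsField k))
  obtain ⟨n, hn, hn0⟩ : ∃ n : ℤ, algebraMap ℤ k n = 0 ∧ n ≠ 0 := by
    simpa only [injective_iff_map_eq_zero, not_forall, exists_prop] using hinj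
  refine Module.finite_of_fg_torsion k fun {x} => ⟨⟨n, mem_nonZeroDivisors_of_ne_zero hn0⟩, ?_⟩
  change n • x = 0
  rw [Algebra.smul_def, hn, zero_mul]

lemma finite_quotient_of_isMaximal {R : Type*} [CommRing R] [Algebra.FiniteType ℤ R]
    (m : Ideal R) [m.IsMaximal] : Finite (R ⧸ m) := by
  have hft : Algebra.FiniteType ℤ (R ⧸ m) :=
    .of_surjective (Ideal.Quotient.mkₐ ℤ m) (Ideal.Quotient.mkₐ_surjective ℤ m)
  let := Ideal.Quotient.field m
  exact @finite_of_finiteType_int (R ⧸ m) _ hft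

section Noetherian

variable {R M : Type*} [CommRing R] [AddCommGroup M] [Module R M]

lemma isOka_finite_quotient [IsNoetherianRing R] :
    Ideal.IsOka fun I : Ideal R => Finite (R ⧸ I) where
  top := inferInstance
  oka {I a} _ _ := by
    have hle : I.colon (Ideal.span {a}) • (I ⊔ Ideal.span {a}) ≤ I := by
      rw [Submodule.smul_sup, smul_eq_mul, smul_eq_mul, sup_le_iff]
      refine ⟨Ideal.mul_le_right, Ideal.mul_le.2 fun r hr s hs => ?_⟩
      exact Submodule.mem_colon.1 hr s hs
    have := Submodule.finite_quotient_smul (I.colon (Ideal.span {a} : Set R))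
      (IsNoetherian.noetherian (I ⊔ Ideal.span {a}))
    exact Finite.of_surjective _ (Submodule.factor_surjective hle)

lemma exists_isPrime_infinite_quotient_of_infinite [IsNoetherianRing R] [Module.Finite R M]
    [hM : Infinite M] :
    ∃ P : Ideal R, P.IsPrime ∧ Module.annihilator R M ≤ P ∧ Infinite (R ⧸ P) := by
  have hann : Infinite (R ⧸ Module.annihilator R M) := by
    by_contra hfin
    rw [not_infinite_iff_finite] at hfin
    have := Submodule.finite_quotient_smul (N := (⊤ : Submodule R M)) (Module.annihilator R M)
      Module.Finite.fg_top
    rw [Submodule.annihilator_top.symm, Submodule.annihilator_smul] at this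
    exact hM.not_finite ((Submodule.quotEquivOfEqBot (⊥ : Submodule R M) rfl).toEquiv.finite_iff.1
      this)
  obtain ⟨P, ⟨hle, hP⟩, hmax⟩ := set_has_maximal_iff_noetherian.2 ‹IsNoetherianRing R›
    {I : Ideal R | Module.annihilator R M ≤ I ∧ Infinite (R ⧸ I)} ⟨_, le_rfl, hann⟩
  refine ⟨P, isOka_finite_quotient.isPrime_of_maximal_not ⟨hP.not_finite, fun I hI hPI => ?_⟩,
    hle, hP⟩
  exact (hPI.eq_or_lt.resolve_right (hmax I ⟨hle.trans hPI, not_finite_iff_infinite.1 hI⟩)).ge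

lemma exists_isMaximal_notMem [IsJacobsonRing R] {P : Ideal R} (hP : P.IsRadical) {a : R}
    (ha : a ∉ P) : ∃ m : Ideal R, m.IsMaximal ∧ P ≤ m ∧ a ∉ m := by
  rw [← IsJacobsonRing.out ‹_› hP, Ideal.jacobson, Submodule.mem_sInf] at ha
  push Not at ha
  obtain ⟨m, ⟨hPm, hm⟩, ham⟩ := ha
  exact ⟨m, hm, hPm, ham⟩

lemma exists_finset_isMaximal_notMem [IsJacobsonRing R] {P : Ideal R} [hP : P.IsPrime]
    (hPmax : ¬ P.IsMaximal) {a : R} (ha : a ∉ P) (n : ℕ) :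
    ∃ T : Finset (Ideal R), T.card = n ∧ ∀ m ∈ T, m.IsMaximal ∧ P < m ∧ a ∉ m := by
  classical
  induction n with
  | zero => exact ⟨∅, by simp⟩
  | succ n ih =>
    obtain ⟨T, hcard, hT⟩ := ih
    have hprod : ¬ ∏ m ∈ T, m ≤ P := fun hle =>
      let ⟨m, hm, hmP⟩ := hP.prod_le.1 hle
      (hT m hm).2.1.not_ge hmP
    obtain ⟨b, hb, hbP⟩ := SetLike.not_le_iff_exists.1 hprod
    obtain ⟨m, hm, hPm, hab⟩ := exists_isMaximal_notMem hP.isRadical (hP.mul_notMem ha hbP)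
    refine ⟨insert m T, ?_, fun m' hm' => ?_⟩
    · rw [Finset.card_insert_of_notMem, hcard]
      exact fun hmT => hab (m.mul_mem_left _ (Ideal.prod_le_inf.trans (Finset.inf_le hmT) hb))
    · rcases Finset.mem_insert.1 hm' with rfl | hmem
      · exact ⟨hm, hPm.lt_of_ne fun h => hPmax (h ▸ hm), fun h => hab (m'.mul_mem_right _ h)⟩
      · exact hT _ hmem

/-- `m • N ≠ N` by Nakayama's lemma. -/
lemma not_smul_top_le_smul_smul_top [IsNoetherian R M] {P m I : Ideal R} [hP : P.IsPrime]
    (hann : Module.annihilator R M ≤ P) (hm : m ≠ ⊤) (hPm : P ≤ m) (hI : ¬ I ≤ P) :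
    ¬ (I • ⊤ : Submodule R M) ≤ m • I • ⊤ := by
  intro hle
  obtain ⟨r, hr, hr0⟩ := Submodule.exists_sub_one_mem_and_smul_eq_zero_of_fg_of_le_smul m _
    (IsNoetherian.noetherian (I • ⊤ : Submodule R M)) hle
  have hrP : r ∉ P := fun h => hm <| (Ideal.eq_top_iff_one _).2 <| by
    simpa using m.sub_mem (hPm h) hr
  refine hI fun i hi => (hP.mem_or_mem (hann ?_ : r * i ∈ P)).resolve_left hrP
  exact Module.mem_annihilator.2 fun x => by
    rw [mul_smul]
    exact hr0 _ (Submodule.smul_mem_smul hi trivial)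

lemma card_quotient_mul_card_quotient_le {m : Ideal R} [hm : m.IsMaximal] {N : Submodule R M}
    (hN : ¬ N ≤ m • N) [Finite (M ⧸ m • N)] :
    Nat.card (R ⧸ m) * Nat.card (M ⧸ N) ≤ Nat.card (M ⧸ m • N) := by
  obtain ⟨n, hnN, hn⟩ := SetLike.not_le_iff_exists.1 hN
  let f : R →ₗ[R] N.map (m • N).mkQ := LinearMap.toSpanSingleton R _
    ⟨(m • N).mkQ n, Submodule.mem_map_of_mem hnN⟩
  have hf (a : R) : f a = 0 ↔ a • n ∈ m • N := by
    rw [Subtype.ext_iff, ← Submodule.Quotient.mk_eq_zero]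
    rfl
  have hker : LinearMap.ker f = m := by
    refine (hm.eq_of_le (fun h => hn ?_) fun a ha => ?_).symm
    · simpa using (hf 1).1 (LinearMap.ker_eq_top.1 h ▸ rfl)
    · exact (hf a).2 (Submodule.smul_mem_smul ha hnN)
  rw [← Submodule.card_quotient_mul_card_quotient N (m • N) Submodule.smul_le_right]
  refine Nat.mul_le_mul_right _ ?_
  rw [Nat.card_congr (Submodule.quotEquivOfEq _ _ hker.symm).toEquiv]
  exact Nat.card_le_card_of_injective _ (LinearMap.ker_eq_bot.1 (f.ker.ker_liftQ_eq_bot' f rfl))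

lemma prod_card_quotient_le [IsNoetherian R M] {P : Ideal R} [hP : P.IsPrime]
    (hann : Module.annihilator R M ≤ P) (s : Multiset (Ideal R))
    (hs : ∀ m ∈ s, m.IsMaximal ∧ P < m) [hfin : Finite (M ⧸ (s.prod • ⊤ : Submodule R M))] :
    (s.map fun m => Nat.card (R ⧸ m)).prod ≤ Nat.card (M ⧸ (s.prod • ⊤ : Submodule R M)) := by
  revert hfin
  induction s using Multiset.induction_on with
  | empty => simp
  | cons m s ih =>
    intro hfin
    obtain ⟨⟨hm, hPm⟩, hs⟩ := Multiset.forall_mem_cons.1 hs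
    have hprod : ¬ s.prod ≤ P := fun hle =>
      let ⟨m', hm', hm'P⟩ := hP.multiset_prod_le.1 hle
      (hs m' hm').2.not_ge hm'P
    rw [Multiset.prod_cons, Submodule.mul_smul] at hfin ⊢
    have : Finite (M ⧸ (s.prod • ⊤ : Submodule R M)) :=
      Finite.of_surjective _ (Submodule.factor_surjective (Submodule.smul_le_right (I := m)))
    rw [Multiset.map_cons, Multiset.prod_cons]
    have hnot := not_smul_top_le_smul_smul_top (M := M) hann hm.ne_top hPm.le hprod
    exact (Nat.mul_le_mul_left _ (ih hs)).trans (card_quotient_mul_card_quotient_le hnot)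

end Noetherian

lemma mul_sub_one_mul_sub_one_mul_two_pow_lt {q₁ q₂ : ℕ} (h₁ : 1 < q₁) (h₂ : 1 < q₂) (n : ℕ) :
    n * ((q₁ - 1) * (q₂ - 1) * 2 ^ n) < q₁ ^ (n + 1) * q₂ ^ (n + 1) := by
  have hpow {q : ℕ} (hq : 1 < q) : (q - 1) * 2 ^ n ≤ q ^ (n + 1) := by
    rw [pow_succ']
    exact Nat.mul_le_mul (Nat.sub_le q 1) (Nat.pow_le_pow_left hq n)
  have hpos : 0 < (q₁ - 1) * (q₂ - 1) * 2 ^ n :=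
    Nat.mul_pos (Nat.mul_pos (Nat.sub_pos_of_lt h₁) (Nat.sub_pos_of_lt h₂)) (by positivity)
  calc n * ((q₁ - 1) * (q₂ - 1) * 2 ^ n)
      < 2 ^ n * ((q₁ - 1) * (q₂ - 1) * 2 ^ n) := by gcongr; exact Nat.lt_two_pow_self
    _ = (q₁ - 1) * 2 ^ n * ((q₂ - 1) * 2 ^ n) := by ring
    _ ≤ q₁ ^ (n + 1) * q₂ ^ (n + 1) := Nat.mul_le_mul (hpow h₁) (hpow h₂)

section LinearGrowth

variable {R : Type*} [CommRing R]

lemma one_lt_card_quotient (m : Ideal R) [hm : m.IsMaximal] [Finite (R ⧸ m)] :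
    1 < Nat.card (R ⧸ m) :=
  have := Ideal.Quotient.nontrivial_iff.2 hm.ne_top
  Finite.one_lt_card

lemma odd_card_quotient (m : Ideal R) [m.IsMaximal] [Finite (R ⧸ m)] (h2 : (2 : R) ∉ m) :
    Odd (Nat.card (R ⧸ m)) := by
  let := Ideal.Quotient.field m
  let := Fintype.ofFinite (R ⧸ m)
  rw [Nat.odd_iff, Nat.card_eq_fintype_card]
  refine FiniteField.odd_card_of_char_ne_two fun h => h2 ?_
  rw [← Ideal.Quotient.eq_zero_iff_mem, map_ofNat, ← Nat.cast_ofNat, ← h,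
    ringChar.Nat.cast_ringChar]

lemma pow_sub_one_mem_of_dvd (m : Ideal R) [m.IsMaximal] [Finite (R ⧸ m)] (t : Rˣ) {n : ℕ}
    (h : Nat.card (R ⧸ m) - 1 ∣ n) : (t : R) ^ n - 1 ∈ m := by
  obtain ⟨k, rfl⟩ := h
  let := Ideal.Quotient.field m
  let := Fintype.ofFinite (R ⧸ m)
  rw [← Ideal.Quotient.eq_zero_iff_mem, map_sub, map_pow, map_one, pow_mul,
    Nat.card_eq_fintype_card, FiniteField.pow_card_sub_one_eq_one, one_pow, sub_self]
  exact (t.isUnit.map (Ideal.Quotient.mk m)).ne_zero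

lemma pow_two_pow_sub_one_mem {I : Ideal R} (h2 : (2 : R) ∈ I) {x : R} (hx : x - 1 ∈ I) (k : ℕ) :
    x ^ 2 ^ k - 1 ∈ I ^ (k + 1) := by
  induction k with
  | zero => simpa using hx
  | succ k ih =>
    have hfactor : x ^ 2 ^ (k + 1) - 1 = (x ^ 2 ^ k - 1) * (x ^ 2 ^ k - 1 + 2) := by ring
    rw [hfactor, pow_succ]
    exact Ideal.mul_mem_mul ih (I.add_mem (Ideal.pow_le_self k.succ_ne_zero ih) h2)

variable {M : Type*} [AddCommGroup M] [Module R M]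

/-- The modules of coinvariants `M ⧸ (t ^ n - 1) M` have at most `C n` elements. This is the
condition that bVCyc imposes on a semidirect product `M ⋊ ℤ` whose generator of `ℤ` acts by `t`. -/
def HasLinearGrowth (M : Type*) [AddCommGroup M] [Module R M] (t : R) (C : ℕ) : Prop :=
  ∀ n > 0, Finite (M ⧸ (Ideal.span {t ^ n - 1} • ⊤ : Submodule R M)) ∧
    Nat.card (M ⧸ (Ideal.span {t ^ n - 1} • ⊤ : Submodule R M)) ≤ C * n

namespace HasLinearGrowth

variable {P : Ideal R} [P.IsPrime] {C : ℕ}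

lemma prod_card_quotient_le [IsNoetherian R M] {t : R} (h : HasLinearGrowth M t C)
    (hann : Module.annihilator R M ≤ P) {s : Multiset (Ideal R)}
    (hs : ∀ m ∈ s, m.IsMaximal ∧ P < m) {n : ℕ} (hn : 0 < n) (hmem : t ^ n - 1 ∈ s.prod) :
    (s.map fun m => Nat.card (R ⧸ m)).prod ≤ C * n := by
  obtain ⟨hfin, hcard⟩ := h n hn
  have hsurj := Submodule.factor_surjective <|
    Submodule.smul_mono_left (N := (⊤ : Submodule R M)) ((Ideal.span_singleton_le_iff_mem _).2 hmem)
  have := Finite.of_surjective _ hsurj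
  exact (_root_.prod_card_quotient_le hann s hs).trans <|
    (Nat.card_le_card_of_surjective _ hsurj).trans hcard

variable [Algebra.FiniteType ℤ R] [Module.Finite R M] {t : Rˣ}

/-- If `q m` are the odd residue cardinalities of `k` maximal ideals above `P`, then `t ^ (2 n) - 1`
lies in all of them for `n = ∏ (q m - 1) / 2`, whereas `∏ q m ≥ 2 ^ k n`. -/
lemma two_mem (h : HasLinearGrowth M (t : R) C) (hann : Module.annihilator R M ≤ P)
    (hP : ¬ P.IsMaximal) : (2 : R) ∈ P := by
  have := Algebra.FiniteType.isNoetherianRing ℤ R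
  have : IsJacobsonRing R := isJacobsonRing_of_finiteType (A := ℤ)
  by_contra h2
  obtain ⟨T, hTcard, hT⟩ := exists_finset_isMaximal_notMem hP h2 (2 * C)
  let q (m : Ideal R) : ℕ := Nat.card (R ⧸ m)
  have hq : ∀ m ∈ T, q m - 1 = 2 * ((q m - 1) / 2) ∧ 0 < (q m - 1) / 2 := fun m hm => by
    obtain ⟨hmax, -, h2m⟩ := hT m hm
    have := finite_quotient_of_isMaximal m
    obtain ⟨j, hj⟩ : Odd (q m) := odd_card_quotient m h2m
    have : 1 < q m := one_lt_card_quotient m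
    omega
  let n := ∏ m ∈ T, (q m - 1) / 2
  have hn : 0 < n := Finset.prod_pos fun m hm => (hq m hm).2
  have hmem : (t : R) ^ (2 * n) - 1 ∈ T.val.prod := by
    rw [Finset.prod_val T, Ideal.prod_eq_iInf_of_pairwise_isCoprime]
    · simp only [Ideal.mem_iInf]
      intro m hm
      have := (hT m hm).1
      have := finite_quotient_of_isMaximal m
      refine pow_sub_one_mem_of_dvd m t ((hq m hm).1 ▸ Nat.mul_dvd_mul_left 2 ?_)
      exact Finset.dvd_prod_of_mem (fun m => (q m - 1) / 2) hm
    · intro m hm m' hm' hne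
      have := (hT m hm).1
      have := (hT m' hm').1
      exact Ideal.isCoprime_of_isMaximal (I := m) (J := m') hne
  have hle : 2 ^ (2 * C) * n ≤ 2 * C * n := calc
    2 ^ (2 * C) * n = ∏ m ∈ T, 2 * ((q m - 1) / 2) := by
      rw [Finset.prod_mul_distrib, Finset.prod_const, hTcard]
    _ ≤ ∏ m ∈ T, q m := Finset.prod_le_prod' fun m hm => (hq m hm).1 ▸ Nat.sub_le _ _
    _ ≤ C * (2 * n) := h.prod_card_quotient_le hann
      (fun m hm => ⟨(hT m hm).1, (hT m hm).2.1⟩) (by positivity) hmem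
    _ = 2 * C * n := by ring
  exact (Nat.le_of_mul_le_mul_right hle hn).not_gt Nat.lt_two_pow_self

/-- Two maximal ideals above `P` of residue cardinalities `q₁`, `q₂` and residue characteristic `2`
give `t ^ ((q₁ - 1) (q₂ - 1) 2 ^ k) - 1 ∈ (m₁ m₂) ^ (k + 1)`, and hence
`(q₁ q₂) ^ (k + 1) ≤ C (q₁ - 1) (q₂ - 1) 2 ^ k`, which fails for large `k`. -/
lemma isMaximal_of_two_mem (h : HasLinearGrowth M (t : R) C) (hann : Module.annihilator R M ≤ P)
    (h2 : (2 : R) ∈ P) : P.IsMaximal := by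
  have := Algebra.FiniteType.isNoetherianRing ℤ R
  have : IsJacobsonRing R := isJacobsonRing_of_finiteType (A := ℤ)
  by_contra hP
  obtain ⟨T, hTcard, hT⟩ := exists_finset_isMaximal_notMem hP (Ideal.IsPrime.one_notMem ‹_›) 2
  obtain ⟨m₁, m₂, hne, rfl⟩ := Finset.card_eq_two.1 hTcard
  obtain ⟨⟨hm₁, hP₁, -⟩, hm₂, hP₂, -⟩ := by simpa using hT
  have := finite_quotient_of_isMaximal m₁
  have := finite_quotient_of_isMaximal m₂
  have hq₁ := one_lt_card_quotient m₁
  have hq₂ := one_lt_card_quotient m₂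
  let a := (Nat.card (R ⧸ m₁) - 1) * (Nat.card (R ⧸ m₂) - 1)
  have ha : 0 < a := Nat.mul_pos (Nat.sub_pos_of_lt hq₁) (Nat.sub_pos_of_lt hq₂)
  have hmem : (t : R) ^ (a * 2 ^ C) - 1 ∈ m₁ ^ (C + 1) * m₂ ^ (C + 1) := by
    rw [Ideal.mul_eq_inf_of_isCoprime
      ((Ideal.isCoprime_of_isMaximal (I := m₁) (J := m₂) hne).pow), pow_mul]
    exact ⟨pow_two_pow_sub_one_mem (hP₁.le h2)
        (pow_sub_one_mem_of_dvd m₁ t (Dvd.intro _ rfl)) C,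
      pow_two_pow_sub_one_mem (hP₂.le h2) (pow_sub_one_mem_of_dvd m₂ t (Dvd.intro_left _ rfl)) C⟩
  have hle := h.prod_card_quotient_le hann
    (s := Multiset.replicate (C + 1) m₁ + Multiset.replicate (C + 1) m₂) (n := a * 2 ^ C)
    (fun m hm => by
      rcases Multiset.mem_add.1 hm with hm | hm <;> rw [Multiset.eq_of_mem_replicate hm] <;> tauto)
    (by positivity) (by
      rwa [Multiset.prod_add, Multiset.prod_replicate, Multiset.prod_replicate])
  simp only [Multiset.map_add, Multiset.map_replicate, Multiset.prod_add,
    Multiset.prod_replicate] at hle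
  exact hle.not_gt (mul_sub_one_mul_sub_one_mul_two_pow_lt hq₁ hq₂ C)

theorem finite (h : HasLinearGrowth M (t : R) C) : Finite M := by
  have := Algebra.FiniteType.isNoetherianRing ℤ R
  by_contra hM
  rw [not_finite_iff_infinite] at hM
  obtain ⟨P, hprime, hann, hP⟩ := exists_isPrime_infinite_quotient_of_infinite (R := R) (M := M)
  have hmax : ¬ P.IsMaximal := fun _ => hP.not_finite (finite_quotient_of_isMaximal P)
  exact hmax (h.isMaximal_of_two_mem hann (h.two_mem hann hmax))

end HasLinearGrowth

end LinearGrowth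

/-! ### Solvable groups with bVCyc -/

lemma VirtuallyCyclic.exists_finiteIndex_injOn_fiber {V : Type*} [Group V]
    (h : VirtuallyCyclic V) : ∃ Z : Subgroup V, Z.FiniteIndex ∧
      ∀ (τ : V →* Multiplicative ℤ) {n}, n ≠ 1 →
        Set.InjOn (QuotientGroup.mk : V → V ⧸ Z) (τ ⁻¹' {n}) := by
  obtain ⟨Z, hcyc, hZ⟩ := h
  obtain ⟨c, rfl⟩ := Subgroup.isCyclic_iff_exists_zpowers_eq_top Z |>.1 hcyc
  refine ⟨_, hZ, fun τ n hn v hv v' hv' hvv' => ?_⟩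
  obtain ⟨i, hi⟩ := Subgroup.mem_zpowers_iff.1 (QuotientGroup.eq.1 hvv')
  obtain ⟨k, hk0, -, hk⟩ := Subgroup.exists_pow_mem_of_index_ne_zero hZ.index_ne_zero v
  obtain ⟨j, hj⟩ := Subgroup.mem_zpowers_iff.1 hk
  rw [Set.mem_preimage, Set.mem_singleton_iff] at hv hv'
  have hτi : τ c ^ i = 1 := by
    rw [← map_zpow, hi, map_mul, map_inv, hv, hv', inv_mul_cancel]
  have hτc : τ c ≠ 1 := fun h1 => hn <| (pow_eq_one_iff_left hk0.ne').1 <| by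
    rw [← hv, ← map_pow, ← hj, map_zpow, h1, one_zpow]
  have hi0 : i = 0 := (IsMulTorsionFree.zpow_eq_one_iff_right hτc).1 hτi
  rw [hi0, zpow_zero] at hi
  exact inv_mul_eq_one.1 hi.symm

section Cocycle

open LaurentPolynomial

variable {H M : Type*} [Group H] [AddCommGroup M] [Module ℤ[T;T⁻¹] M]

/-- Presents `H` as the semidirect product `M ⋊ ℤ`, where the generator of `ℤ` acts on `M` by
multiplication by the variable `T`: `τ` is the projection to `ℤ` and `α` the (crossed) projection
to `M`. -/
structure IsSemidirectProjection (τ : H →* Multiplicative ℤ) (α : H → M) : Prop where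
  map_mul : ∀ x y, α (x * y) = α x + (T (τ x).toAdd : ℤ[T;T⁻¹]) • α y
  exists_eq : ∀ a n, ∃ x, α x = a ∧ τ x = n

lemma T_sub_T_emod_mem_span (n j : ℤ) :
    (T j - T (j % n) : ℤ[T;T⁻¹]) ∈ Ideal.span {(T n - 1 : ℤ[T;T⁻¹])} := by
  have hmul (k : ℤ) : (T (n * k) - 1 : ℤ[T;T⁻¹]) ∈ Ideal.span {(T n - 1 : ℤ[T;T⁻¹])} := by
    have hstep (k : ℤ) : (T (n * (k + 1)) - 1 : ℤ[T;T⁻¹]) =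
        T (n * k) * (T n - 1) + (T (n * k) - 1) := by
      rw [mul_add, mul_one, T_add]
      ring
    have hmem (k : ℤ) : (T (n * k) * (T n - 1) : ℤ[T;T⁻¹]) ∈ Ideal.span {(T n - 1 : ℤ[T;T⁻¹])} :=
      Ideal.mul_mem_left _ _ (Ideal.mem_span_singleton_self _)
    induction k using Int.induction_on with
    | zero => simp
    | succ k ih => exact hstep k ▸ Ideal.add_mem _ (hmem k) ih
    | pred k ih =>
      have hpred := hstep (-k - 1)
      rw [sub_add_cancel] at hpred
      exact (Ideal.add_mem_iff_right _ (hmem _)).1 (hpred ▸ ih)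
  have hfactor : (T j - T (j % n) : ℤ[T;T⁻¹]) = T (j % n) * (T (n * (j / n)) - 1) := by
    rw [mul_sub, mul_one, ← T_add, Int.emod_add_mul_ediv]
  exact hfactor ▸ Ideal.mul_mem_left _ _ (hmul _)

namespace IsSemidirectProjection

variable {τ : H →* Multiplicative ℤ} {α : H → M}

lemma map_one (h : IsSemidirectProjection τ α) : α 1 = 0 := by
  simpa using h.map_mul 1 1

lemma map_inv (h : IsSemidirectProjection τ α) (x : H) :
    α x⁻¹ = -((T (-(τ x).toAdd) : ℤ[T;T⁻¹]) • α x) := by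
  refine eq_neg_of_add_eq_zero_left ?_
  rw [← toAdd_inv, ← _root_.map_inv, ← h.map_mul, inv_mul_cancel, h.map_one]

lemma map_conj (h : IsSemidirectProjection τ α) (y x : H) :
    α (y * x * y⁻¹) = (T (τ y).toAdd : ℤ[T;T⁻¹]) • α x -
      (T (τ x).toAdd - 1 : ℤ[T;T⁻¹]) • α y := by
  have hτ : τ (y * x * y⁻¹) = τ x := by
    rw [mul_assoc, _root_.map_mul, mul_comm, ← _root_.map_mul, inv_mul_cancel_right]
  have hmul := h.map_mul (y * x * y⁻¹) y
  rw [inv_mul_cancel_right, h.map_mul y x, hτ] at hmul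
  rw [eq_sub_of_add_eq hmul.symm, sub_smul, one_smul]
  abel

lemma module_finite (h : IsSemidirectProjection τ α) (hfg : Group.FG H) :
    Module.Finite ℤ[T;T⁻¹] M := by
  classical
  obtain ⟨S, hS⟩ := Group.fg_def.1 hfg
  refine ⟨⟨S.image α, Submodule.eq_top_iff'.2 fun a => ?_⟩⟩
  obtain ⟨x, rfl, -⟩ := h.exists_eq a 1
  have hx : x ∈ Subgroup.closure (S : Set H) := hS ▸ Subgroup.mem_top x
  induction hx using Subgroup.closure_induction with
  | mem s hs => exact Submodule.subset_span (Finset.mem_coe.2 (Finset.mem_image_of_mem α hs))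
  | one => exact h.map_one ▸ Submodule.zero_mem _
  | mul x y _ _ hx hy => exact h.map_mul x y ▸ Submodule.add_mem _ hx (Submodule.smul_mem _ _ hy)
  | inv x _ hx => exact h.map_inv x ▸ Submodule.neg_mem _ (Submodule.smul_mem _ _ hx)

/-- Every `(a, n)` is conjugate to an element `v` of one of the finitely many subgroups `V`, and
conjugation by `(b, j)` multiplies `a` by `T ^ j` modulo `(T ^ n - 1) M`. -/
lemma exists_mk_eq (h : IsSemidirectProjection τ α) {S : Finset (Subgroup H)}
    (hS : ∀ g : H, ∃ V ∈ S, ∃ x : H, x * g * x⁻¹ ∈ V) {n : ℕ} (hn : 0 < n)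
    (q : M ⧸ (Ideal.span {(T 1 ^ n - 1 : ℤ[T;T⁻¹])} • ⊤ : Submodule ℤ[T;T⁻¹] M)) :
    ∃ V : S, ∃ v : V.1, ∃ j : Fin n, τ v = Multiplicative.ofAdd (n : ℤ) ∧
      q = Submodule.Quotient.mk ((T (j : ℕ) : ℤ[T;T⁻¹]) • α v) := by
  obtain ⟨a, rfl⟩ := Submodule.Quotient.mk_surjective _ q
  obtain ⟨x, rfl, hx⟩ := h.exists_eq a (Multiplicative.ofAdd (n : ℤ))
  obtain ⟨V, hV, y, hy⟩ := hS x
  have hn0 : (n : ℤ) ≠ 0 := by exact_mod_cast hn.ne'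
  set j := -(τ y).toAdd with hj
  obtain ⟨r, hr⟩ := Int.eq_ofNat_of_zero_le (Int.emod_nonneg j hn0)
  have hrn : r < n := by
    exact_mod_cast hr ▸ Int.emod_lt_of_pos j (Int.natCast_pos.2 hn)
  refine ⟨⟨V, hV⟩, ⟨_, hy⟩, ⟨r, hrn⟩, ?_, ?_⟩
  · simp [hx]
  have hconj : (T j : ℤ[T;T⁻¹]) • α (y * x * y⁻¹) =
      α x - (T j * (T n - 1) : ℤ[T;T⁻¹]) • α y := by
    rw [h.map_conj, smul_sub, smul_smul, smul_smul, ← T_add, hj, neg_add_cancel, T_zero, one_smul,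
      hx, toAdd_ofAdd]
  have hsplit : α x - (T (j % n) : ℤ[T;T⁻¹]) • α (y * x * y⁻¹) =
      (T j * (T n - 1) : ℤ[T;T⁻¹]) • α y + (T j - T (j % n) : ℤ[T;T⁻¹]) • α (y * x * y⁻¹) := by
    rw [sub_smul, hconj]
    abel
  rw [Submodule.Quotient.eq, ← hr, T_pow, mul_one]
  rw [hsplit]
  refine Submodule.add_mem _ ?_ ?_ <;> refine Submodule.smul_mem_smul ?_ trivial
  · exact Ideal.mul_mem_left _ _ (Ideal.mem_span_singleton_self _)
  · exact T_sub_T_emod_mem_span _ _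

lemma exists_hasLinearGrowth (h : IsSemidirectProjection τ α) (hb : bVCyc H) :
    ∃ C, HasLinearGrowth M (T 1 : ℤ[T;T⁻¹]) C := by
  obtain ⟨S, hS, hcover⟩ := hb
  choose Z hZ hinj using fun V : S => (hS V.1 V.2).exists_finiteIndex_injOn_fiber
  refine ⟨Nat.card (Σ V : S, V.1 ⧸ Z V), fun n hn => ?_⟩
  choose V v j hv hq using h.exists_mk_eq hcover hn
  have hne : Multiplicative.ofAdd (n : ℤ) ≠ 1 := by simpa using hn.ne'
  have heq : ∀ {V V' : S} {v : V.1} {v' : V'.1}, τ v = Multiplicative.ofAdd (n : ℤ) →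
      τ v' = Multiplicative.ofAdd (n : ℤ) →
      (⟨V, v⟩ : Σ V : S, V.1 ⧸ Z V) = ⟨V', v'⟩ → (v : H) = v' := by
    rintro V V' v v' hv hv' h
    obtain ⟨rfl, h⟩ := Sigma.mk.inj_iff.1 h
    exact congrArg _ (hinj V (τ.comp V.1.subtype) hne hv hv' (eq_of_heq h))
  let f q : (Σ V : S, V.1 ⧸ Z V) × Fin n := (⟨V q, v q⟩, j q)
  have hf : Function.Injective f := fun q q' hqq' => by
    rw [hq q, hq q', heq (hv q) (hv q') (congrArg Prod.fst hqq'),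
      show j q = j q' from congrArg Prod.snd hqq']
  refine ⟨Finite.of_injective f hf, ?_⟩
  simpa only [Nat.card_prod, Nat.card_fin] using Nat.card_le_card_of_injective f hf

theorem finite (h : IsSemidirectProjection τ α) (hfg : Group.FG H) (hb : bVCyc H) :
    Finite M := by
  have hft : @Algebra.FiniteType ℤ ℤ[T;T⁻¹] _ _ (Ring.toIntAlgebra _) := by
    have := AddMonoidAlgebra.finiteType_of_fg (R := ℤ) (M := ℤ)
    rwa [Subsingleton.elim (Ring.toIntAlgebra ℤ[T;T⁻¹]) AddMonoidAlgebra.algebra]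
  have := h.module_finite hfg
  obtain ⟨t, ht⟩ := isUnit_T (R := ℤ) 1
  obtain ⟨C, hC⟩ := h.exists_hasLinearGrowth hb
  exact (ht ▸ hC : HasLinearGrowth M (t : ℤ[T;T⁻¹]) C).finite

end IsSemidirectProjection

end Cocycle

section Extensions

open scoped IsMulCommutative

variable {H : Type*} [Group H]

open LaurentPolynomial in
/-- A lift `t` of a generator of `ℤ` splits the extension. -/
lemma finite_ker_of_surjective_int (hfg : Group.FG H) (hb : bVCyc H)
    (τ : H →* Multiplicative ℤ) (hτ : Function.Surjective τ) [IsMulCommutative τ.ker] :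
    Finite τ.ker := by
  obtain ⟨t, ht⟩ := hτ (Multiplicative.ofAdd 1)
  have hsplit (n : Multiplicative ℤ) : τ (t ^ n.toAdd) = n := by
    rw [map_zpow, ht, ← ofAdd_zsmul, smul_eq_mul, mul_one, ofAdd_toAdd]
  let Θ : Multiplicative ℤ →* Module.End ℤ (Additive τ.ker) :=
    { toFun := fun n => (MonoidHom.toAdditive
        (MulAut.conjNormal (H := τ.ker) (t ^ n.toAdd)).toMonoidHom).toIntLinearMap
      map_one' := by ext a; simp
      map_mul' := fun m n => by
        ext a
        apply Additive.toMul.injective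
        simp [zpow_add] }
  let : Module ℤ[T;T⁻¹] (Additive τ.ker) :=
    Module.compHom _ (AddMonoidAlgebra.lift ℤ (Module.End ℤ (Additive τ.ker)) ℤ Θ).toRingHom
  have hsmul (n : ℤ) (a : Additive τ.ker) :
      (T n : ℤ[T;T⁻¹]) • a = Θ (Multiplicative.ofAdd n) a := by
    change AddMonoidAlgebra.lift ℤ (Module.End ℤ (Additive τ.ker)) ℤ Θ (T n) a = _
    rw [T, AddMonoidAlgebra.lift_single, one_smul]
  let α (x : H) : Additive τ.ker := Additive.ofMul ⟨x * t ^ (-(τ x).toAdd), by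
    rw [MonoidHom.mem_ker, map_mul, ← toAdd_inv, hsplit, mul_inv_cancel]⟩
  have hα : IsSemidirectProjection τ α := by
    refine ⟨fun x y => Additive.toMul.injective (Subtype.ext ?_), fun a n => ?_⟩
    · simp [hsmul, α, Θ, zpow_add, mul_assoc, -map_zpow]
    · have ha : τ a.toMul = 1 := a.toMul.2
      refine ⟨a.toMul * t ^ n.toAdd, Additive.toMul.injective (Subtype.ext ?_), ?_⟩
      · simp [α, ha, hsplit]
      · rw [map_mul, ha, hsplit, one_mul]
  exact hα.finite hfg hb

lemma virtuallyCyclic_of_surjective_int (hfg : Group.FG H) (hb : bVCyc H)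
    (τ : H →* Multiplicative ℤ) (hτ : Function.Surjective τ) [IsMulCommutative τ.ker] :
    VirtuallyCyclic H := by
  have := finite_ker_of_surjective_int hfg hb τ hτ
  obtain ⟨t, ht⟩ := hτ (Multiplicative.ofAdd 1)
  have hker (x : H) : x * t ^ (-(τ x).toAdd) ∈ τ.ker := by
    rw [MonoidHom.mem_ker, map_mul, map_zpow, ht, ← ofAdd_zsmul, smul_eq_mul, mul_one, ofAdd_neg,
      ofAdd_toAdd, mul_inv_cancel]
  have : Finite (H ⧸ Subgroup.zpowers t) := by
    refine Finite.of_surjective (fun a : τ.ker => (a : H ⧸ Subgroup.zpowers t)) fun q => ?_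
    obtain ⟨x, rfl⟩ := QuotientGroup.mk_surjective q
    refine ⟨⟨_, hker x⟩, QuotientGroup.eq.2 <| Subgroup.mem_zpowers_iff.2 ⟨(τ x).toAdd, ?_⟩⟩
    simp
  exact ⟨Subgroup.zpowers t, inferInstance, Subgroup.finiteIndex_of_finite_quotient⟩

lemma virtuallyCyclic_of_surjective_isCyclic {Q : Type*} [Group Q] [IsCyclic Q]
    (hfg : Group.FG H) (hb : bVCyc H) (f : H →* Q) (hf : Function.Surjective f)
    [hcomm : IsMulCommutative f.ker] : VirtuallyCyclic H := by
  rcases finite_or_infinite Q with hQ | hQ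
  · exact (hb.of_finiteIndex f.ker).virtuallyCyclic_of_comm.of_finiteIndex f.ker
  · let e : Q ≃* Multiplicative ℤ := intCyclicMulEquiv.symm
    have hker : (e.toMonoidHom.comp f).ker = f.ker := MonoidHom.ker_mulEquiv_comp f e
    have : IsMulCommutative (e.toMonoidHom.comp f).ker := hker ▸ hcomm
    exact virtuallyCyclic_of_surjective_int hfg hb (e.toMonoidHom.comp f) (e.surjective.comp hf)

/-- Modulo the last nontrivial derived subgroup `A` the group is virtually cyclic by induction, so a
finite index subgroup is an extension of a cyclic group by the abelian group `A`. -/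
lemma virtuallyCyclic_of_derivedSeries_eq_bot {G : Type*} [Group G] (hfg : Group.FG G)
    (hb : bVCyc G) (n : ℕ) (h : derivedSeries G n = ⊥) : VirtuallyCyclic G := by
  induction n generalizing G with
  | zero =>
    rw [derivedSeries_zero] at h
    exact ⟨⊤, h ▸ inferInstance, inferInstance⟩
  | succ n ih =>
    have := derivedSeries_normal G n
    set A := derivedSeries G n with hA
    let π := QuotientGroup.mk' A
    have hπ : Function.Surjective π := QuotientGroup.mk'_surjective A
    have : IsMulCommutative A := Subgroup.commutator_self_eq_bot_iff.1 h
    have hder : derivedSeries (G ⧸ A) n = ⊥ := by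
      rw [← map_derivedSeries_eq hπ, ← hA, Subgroup.map_eq_bot_iff, QuotientGroup.ker_mk']
    obtain ⟨Q, hcyc, hQ⟩ := ih (QuotientGroup.fg A) (hb.of_surjective π hπ) hder
    have : (Q.comap π).FiniteIndex :=
      ⟨(Subgroup.index_comap_of_surjective Q hπ).trans_ne hQ.index_ne_zero⟩
    have hker : (π.subgroupComap Q).ker = A.subgroupOf (Q.comap π) := by
      ext x
      rw [MonoidHom.mem_ker, Subtype.ext_iff, Subgroup.mem_subgroupOf]
      exact QuotientGroup.eq_one_iff _
    have : IsMulCommutative (π.subgroupComap Q).ker := hker ▸ inferInstance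
    refine VirtuallyCyclic.of_finiteIndex (Q.comap π) ?_
    exact virtuallyCyclic_of_surjective_isCyclic (Subgroup.fg_of_index_ne_zero _)
      (hb.of_finiteIndex _) _ (π.subgroupComap_surjective_of_surjective Q hπ)

theorem bVCyc.virtuallyCyclic_of_isSolvable {G : Type*} [Group G] [hG : Group.IsSolvable G]
    (hb : bVCyc G) (hfg : Group.FG G) : VirtuallyCyclic G :=
  let ⟨n, hn⟩ := hG.solvable
  virtuallyCyclic_of_derivedSeries_eq_bot hfg hb n hn

end Extensions

/-! ### Dominant eigenvalues -/

section DominantEigenvalue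

variable {L : Type*} [NormedField L] {ι : Type*} [Fintype ι] [DecidableEq ι] {A B : Matrix ι ι L}

/-- `μ` is an eigenvalue of `A` of maximal modulus. Its modulus is the spectral radius of `A`, but
the eigenvalue itself is kept, so that everything stays in `L` and `ℝ`. -/
structure IsDominantEigenvalue (A : Matrix ι ι L) (μ : L) : Prop where
  mem_spectrum : μ ∈ spectrum L A
  norm_le : ∀ ν ∈ spectrum L A, ‖ν‖ ≤ ‖μ‖

lemma exists_isDominantEigenvalue [IsAlgClosed L] [Nonempty ι] (A : Matrix ι ι L) :
    ∃ μ, IsDominantEigenvalue A μ := by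
  obtain ⟨μ, hμ, h⟩ := Set.exists_max_image _ (‖·‖) (Matrix.finite_spectrum A)
    (spectrum.nonempty_of_isAlgClosed_of_finiteDimensional L A)
  exact ⟨μ, hμ, h⟩

namespace IsDominantEigenvalue

variable {μ ν : L}

lemma norm_eq_of_spectrum_eq (hA : IsDominantEigenvalue A μ) (hB : IsDominantEigenvalue B ν)
    (h : spectrum L A = spectrum L B) : ‖μ‖ = ‖ν‖ :=
  le_antisymm (hB.norm_le μ (h ▸ hA.mem_spectrum)) (hA.norm_le ν (h ▸ hB.mem_spectrum))

lemma pow [IsAlgClosed L] (h : IsDominantEigenvalue A μ) (n : ℕ) :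
    IsDominantEigenvalue (A ^ n) (μ ^ n) := by
  have hpow := spectrum.map_pow_of_nonempty ⟨μ, h.mem_spectrum⟩ n
  refine ⟨hpow ▸ ⟨μ, h.mem_spectrum, rfl⟩, fun ν hν => ?_⟩
  obtain ⟨κ, hκ, rfl⟩ := hpow ▸ hν
  simp only [norm_pow]
  gcongr
  exact h.norm_le κ hκ

lemma norm_trace_le [IsAlgClosed L] (h : IsDominantEigenvalue A μ) :
    ‖A.trace‖ ≤ Fintype.card ι * ‖μ‖ := by
  have hroots : ∀ t ∈ A.charpoly.roots.map (‖·‖), t ≤ ‖μ‖ := by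
    simp only [Multiset.mem_map, forall_exists_index, and_imp, forall_apply_eq_imp_iff₂]
    exact fun ν hν => h.norm_le ν
      (Matrix.mem_spectrum_iff_isRoot_charpoly.2 (Polynomial.isRoot_of_mem_roots hν))
  calc ‖A.trace‖ = ‖A.charpoly.roots.sum‖ := by rw [Matrix.trace_eq_sum_roots_charpoly]
    _ ≤ (A.charpoly.roots.map (‖·‖)).sum := norm_multiset_sum_le _
    _ ≤ (A.charpoly.roots.map (‖·‖)).card • ‖μ‖ := Multiset.sum_le_card_nsmul _ _ hroots
    _ = Fintype.card ι * ‖μ‖ := by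
      rw [Multiset.card_map, IsAlgClosed.card_roots_eq_natDegree, Matrix.charpoly_natDegree_eq_dim,
        nsmul_eq_mul]

attribute [local instance] Matrix.linftyOpNormedRing in
lemma norm_le_linfty_opNorm (h : IsDominantEigenvalue A μ) : ‖μ‖ ≤ ‖A‖ := by
  have hμ := h.mem_spectrum
  rw [← Matrix.spectrum_toLin', ← Module.End.hasEigenvalue_iff_mem_spectrum] at hμ
  obtain ⟨v, hv⟩ := hμ.exists_hasEigenvector
  refine le_of_mul_le_mul_right ?_ (norm_pos_iff.2 hv.2)
  rw [← norm_smul, ← hv.apply_eq_smul]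
  exact Matrix.linfty_opNorm_mulVec A v

end IsDominantEigenvalue

lemma exists_forall_mem_Ico_of_le_pow_le {r : ℝ} (hr : 0 ≤ r) (q : ℝ) :
    ∃ b : ℕ, ∀ x : ℝ, 1 < x → ∃ n₀, ∀ n, x ≤ r ^ n → r ^ n ≤ q * x →
      n ∈ Finset.Ico n₀ (n₀ + b) := by
  rcases le_or_gt r 1 with hr1 | hr1
  · exact ⟨0, fun x hx => ⟨0, fun n hn => absurd (hn.trans (pow_le_one₀ hr hr1)) hx.not_ge⟩⟩
  obtain ⟨b, hb⟩ := pow_unbounded_of_one_lt q hr1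
  classical
  refine ⟨b, fun x hx => ?_⟩
  have hex : ∃ n, x ≤ r ^ n := (pow_unbounded_of_one_lt x hr1).imp fun _ => le_of_lt
  refine ⟨Nat.find hex, fun n hn hn' => Finset.mem_Ico.2 ⟨Nat.find_le hn, ?_⟩⟩
  by_contra! hlt
  have : q * x < r ^ n := calc
    q * x < r ^ b * x := by gcongr
    _ ≤ r ^ b * r ^ Nat.find hex := by gcongr; exact Nat.find_spec hex
    _ = r ^ (Nat.find hex + b) := by rw [pow_add, mul_comm]
    _ ≤ r ^ n := pow_le_pow_right₀ hr1.le hlt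
  exact this.not_ge hn'

lemma CoversPowers.exists_isConj_natPow {G : Type*} [Group G] {C : Finset G} {N : ℕ}
    (hC : CoversPowers C N) :
    ∃ C' : Finset G, ∀ g : G, ∃ c ∈ C', ∃ k : ℕ, IsConj (c ^ k) (g ^ N) := by
  classical
  refine ⟨C ∪ C.image (·⁻¹), fun g => ?_⟩
  obtain ⟨c, hc, k, hk⟩ := hC.exists_isConj g
  obtain ⟨n, rfl | rfl⟩ := k.eq_nat_or_neg
  · exact ⟨c, Finset.mem_union_left _ hc, n, by simpa using hk⟩
  · exact ⟨c⁻¹, Finset.mem_union_right _ (Finset.mem_image_of_mem _ hc), n, by simpa using hk⟩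

/-- The modulus of a dominant eigenvalue of `ρ w` leaves boundedly many possibilities for the power
`c ^ k` to which `w ^ N` is conjugate. -/
lemma CoversPowers.exists_card_trace_pow_le [IsAlgClosed L] [Nonempty ι] {G : Type*} [Group G]
    {C : Finset G} {N : ℕ} (hC : CoversPowers C N) (ρ : G →* Matrix ι ι L) (q : ℝ) :
    ∃ m : ℕ, ∀ x : ℝ, 1 < x → ∃ V : Finset L, V.card ≤ m ∧ ∀ w μ,
      IsDominantEigenvalue (ρ w) μ → x ≤ ‖μ‖ → ‖μ‖ ≤ q * x → (ρ w ^ N).trace ∈ V := by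
  classical
  obtain ⟨C', hC'⟩ := hC.exists_isConj_natPow
  choose κ hκ using fun c => exists_isDominantEigenvalue (ρ c)
  choose b hb using fun c => exists_forall_mem_Ico_of_le_pow_le (norm_nonneg (κ c)) (q ^ N)
  refine ⟨∑ c ∈ C', b c, fun x hx => ?_⟩
  choose n₀ hn₀ using fun c => hb c (x ^ N) (one_lt_pow₀ hx hC.pos.ne')
  refine ⟨C'.biUnion fun c => (Finset.Ico (n₀ c) (n₀ c + b c)).image fun k => (ρ c ^ k).trace,
    Finset.card_biUnion_le.trans (Finset.sum_le_sum fun c _ => Finset.card_image_le.trans ?_),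
    fun w μ hμ hxμ hμx => ?_⟩
  · simp
  obtain ⟨c, hc, k, hk⟩ := hC' w
  obtain ⟨u, hu⟩ := isConj_iff.1 hk
  have hconj : ρ w ^ N = ρ u * ρ c ^ k * ρ u⁻¹ := by simp only [← map_pow, ← map_mul, hu]
  have hspec : spectrum L (ρ w ^ N) = spectrum L (ρ c ^ k) := by
    rw [hconj]
    exact spectrum.units_conjugate (u := Units.map ρ (toUnits u))
  have hnorm : ‖μ‖ ^ N = ‖κ c‖ ^ k := by
    simpa only [norm_pow] using (hμ.pow N).norm_eq_of_spectrum_eq ((hκ c).pow k) hspec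
  have htrace : (ρ w ^ N).trace = (ρ c ^ k).trace := by
    rw [hconj, Matrix.trace_mul_cycle, ← map_mul, inv_mul_cancel, map_one, one_mul]
  rw [htrace]
  refine Finset.mem_biUnion.2 ⟨c, hc, Finset.mem_image_of_mem _ (hn₀ c k ?_ ?_)⟩
  · rw [← hnorm]
    gcongr
  · rw [← hnorm, ← mul_pow]
    gcongr

end DominantEigenvalue

/-! ### Proximal elements -/

section Sequences

open Filter Topology Matrix

lemma eventually_eq_of_finite_range {X : Type*} [TopologicalSpace X] [T1Space X] {u : ℕ → X} {l : X}
    (h : Tendsto u atTop (𝓝 l)) (hf : (Set.range u).Finite) : ∀ᶠ a in atTop, u a = l := by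
  have hnhds : (Set.range u \ {l})ᶜ ∈ 𝓝 l :=
    (hf.subset Set.sdiff_subset).isClosed.isOpen_compl.mem_nhds (by simp)
  filter_upwards [h hnhds] with a ha
  by_contra hne
  exact ha ⟨⟨a, rfl⟩, hne⟩

lemma finite_range_of_tendsto_of_card_le {X α : Type*} [TopologicalSpace X] [T2Space X]
    {F : α → ℕ → X} {f : α → X} (hF : ∀ a, Tendsto (F a) atTop (𝓝 (f a))) {m : ℕ}
    (hm : ∀ S : Finset α, ∀ᶠ s in atTop, ∃ V : Finset X, V.card ≤ m ∧ ∀ a ∈ S, F a s ∈ V) :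
    (Set.range f).Finite := by
  by_contra hinf
  have : Nonempty α := (Set.range_nonempty_iff_nonempty.1 (Set.Infinite.nonempty hinf))
  obtain ⟨T, hT, hTcard⟩ := Set.Infinite.exists_subset_card_eq hinf (m + 1)
  choose! φ hφ using fun p (hp : p ∈ T) => hT hp
  have hinj : ∀ᶠ s in atTop, ∀ p ∈ T, ∀ q ∈ T, p ≠ q → F (φ p) s ≠ F (φ q) s := by
    simp only [Finset.eventually_all, eventually_imp_distrib_left]
    intro p hp q hq hpq
    have hne : f (φ p) ≠ f (φ q) := by rwa [hφ p hp, hφ q hq]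
    have hopen : {z : X × X | z.1 ≠ z.2} ∈ 𝓝 (f (φ p), f (φ q)) :=
      (isOpen_ne_fun continuous_fst continuous_snd).mem_nhds hne
    exact ((hF (φ p)).prodMk_nhds (hF (φ q))) hopen
  classical
  obtain ⟨s, hs, V, hV, hFV⟩ := (hinj.and (hm (T.image φ))).exists
  have hle : T.card ≤ V.card := Finset.card_le_card_of_injOn (fun p => F (φ p) s)
    (fun p hp => hFV _ (Finset.mem_image_of_mem φ hp))
    (fun p hp q hq hpq => not_not.1 fun hne => hs p hp q hq hne hpq)
  omega

end Sequences

section MatrixCoefficient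

open Filter

variable {K V : Type*} [Field K] [AddCommGroup V] [Module K V] [FiniteDimensional K V]

/-- A linear recurrence sequence which is eventually zero vanishes from the start, as long as the
recurrence can be run backwards. -/
lemma dual_apply_eq_zero_of_eventually_pow {T : Module.End K V} (hT : Function.Injective T)
    {l : Module.Dual K V} {z : V} (h : ∀ᶠ a : ℕ in atTop, l ((T ^ a) z) = 0) : l z = 0 := by
  obtain ⟨n, hn⟩ := eventually_atTop.1 h
  let S : Submodule K V := ⨅ a ≥ n, (l ∘ₗ T ^ a).ker
  have mem_S {z : V} : z ∈ S ↔ ∀ a ≥ n, l ((T ^ a) z) = 0 := by simp [S]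
  have hinj : Function.Injective (T ^ n) := by
    rw [Module.End.coe_pow]
    exact hT.iterate n
  have hmap : S.map (T ^ n) = S := by
    refine Submodule.eq_of_le_of_finrank_eq ?_ (S.equivMapOfInjective _ hinj).finrank_eq.symm
    rintro _ ⟨z, hz, rfl⟩
    refine mem_S.2 fun a ha => ?_
    rw [← Module.End.mul_apply, ← pow_add]
    exact mem_S.1 hz (a + n) (by omega)
  obtain ⟨z', hz', rfl⟩ : z ∈ S.map (T ^ n) := hmap.symm ▸ mem_S.2 hn
  exact mem_S.1 hz' n le_rfl

variable {G : Type*} [Group G] (ρ : G →* Module.End K V) {l : Module.Dual K V} {v : V}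
  (hlv : l v = 1)

include hlv

lemma index_le_finrank_of_forall_mem {M : Subgroup G} (hM : ∀ x, l (ρ x v) ≠ 0 → x ∈ M) :
    M.index ≠ 0 ∧ M.index ≤ Module.finrank K V := by
  have hcancel (x : G) : ρ x⁻¹ (ρ x v) = v := by
    rw [← Module.End.mul_apply, ← map_mul, inv_mul_cancel, map_one, Module.End.one_apply]
  have hindep : LinearIndependent K fun q : G ⧸ M => ρ q.out v := by
    refine .of_pairwise_dual_eq_zero_one _ (fun q => l ∘ₗ ρ q.out⁻¹) (fun p q hpq => ?_)
      fun q => by simp [hcancel, hlv]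
    by_contra hne
    have hmem : p.out⁻¹ * q.out ∈ M := hM _ (by rwa [map_mul])
    exact hpq (by simpa using QuotientGroup.eq.2 hmem)
  have := hindep.finite
  have := Fintype.ofFinite (G ⧸ M)
  rw [Subgroup.index, Nat.card_eq_fintype_card]
  exact ⟨Fintype.card_ne_zero, hindep.fintype_card_le_finrank⟩

variable (hmul : ∀ x y, l (ρ x v) ≠ 0 → l (ρ y v) ≠ 0 →
  l (ρ (x * y) v) = l (ρ x v) * l (ρ y v))

include hmul

lemma dual_apply_map_inv_ne_zero {x : G} (hx : l (ρ x v) ≠ 0) : l (ρ x⁻¹ v) ≠ 0 := by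
  have hpow (n : ℕ) : l (ρ (x ^ n) v) = l (ρ x v) ^ n := by
    induction n with
    | zero => simp [hlv]
    | succ n ih => rw [pow_succ, hmul _ _ (ih ▸ pow_ne_zero n hx) hx, ih, pow_succ]
  have hinj : Function.Injective (ρ x) :=
    ((Module.End.isUnit_iff _).1 ((Group.isUnit x).map ρ)).1
  have hzero : l (ρ x⁻¹ (ρ x v - l (ρ x v) • v)) = 0 := by
    refine dual_apply_eq_zero_of_eventually_pow hinj (l := l ∘ₗ ρ x⁻¹) ?_
    filter_upwards [eventually_ge_atTop 1] with a ha
    obtain ⟨n, rfl⟩ := Nat.exists_eq_add_of_le' ha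
    have hshift (w : V) : ρ x⁻¹ ((ρ x ^ (n + 1)) w) = ρ (x ^ n) w := by
      rw [← map_pow, ← Module.End.mul_apply, ← map_mul, pow_succ', inv_mul_cancel_left]
    rw [LinearMap.comp_apply, hshift, map_sub, map_smul, ← Module.End.mul_apply, ← map_mul,
      ← pow_succ, map_sub, map_smul, hpow, hpow, pow_succ', smul_eq_mul, sub_self]
  intro hinv
  rw [map_sub, ← Module.End.mul_apply, ← map_mul, inv_mul_cancel, map_one, map_smul, map_sub,
    map_smul, hinv, smul_zero, sub_zero, Module.End.one_apply, hlv] at hzero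
  exact one_ne_zero hzero

/-- The set where a matrix coefficient multiplicative on its support does not vanish is a subgroup,
and the coefficient is a character of it. -/
lemma exists_index_le_finrank_forall_mem_commutator :
    ∃ M : Subgroup G, M.index ≠ 0 ∧ M.index ≤ Module.finrank K V ∧
      ∀ g ∈ ⁅M, M⁆, l (ρ g v) = 1 := by
  let M : Subgroup G :=
    { carrier := {x | l (ρ x v) ≠ 0}
      one_mem' := by simp [hlv]
      mul_mem' := fun {x y} hx hy => by
        rw [Set.mem_ofPred_eq, hmul x y hx hy]
        exact mul_ne_zero hx hy
      inv_mem' := dual_apply_map_inv_ne_zero ρ hlv hmul }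
  let χ : M →* K :=
    { toFun x := l (ρ x v)
      map_one' := by simp [hlv]
      map_mul' x y := hmul x y x.2 y.2 }
  obtain ⟨hindex, hle⟩ := index_le_finrank_of_forall_mem ρ hlv (M := M) fun _ hx => hx
  refine ⟨M, hindex, hle, fun g hg => ?_⟩
  rw [← Subgroup.map_subtype_commutator] at hg
  obtain ⟨m, hm, rfl⟩ := hg
  exact congrArg Units.val (Abelianization.commutator_subset_ker χ.toHomUnits hm)

end MatrixCoefficient

section Proximal

open Filter Topology Matrix

variable {L : Type*} [NormedField L] {ι : Type*} [Fintype ι] [DecidableEq ι]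

lemma trace_vecMulVec_pow (v w : ι → L) {N : ℕ} (hN : 0 < N) :
    (vecMulVec v w ^ N).trace = (w ⬝ᵥ v) ^ N := by
  have hpow (n : ℕ) : vecMulVec v w ^ (n + 1) = (w ⬝ᵥ v) ^ n • vecMulVec v w := by
    induction n with
    | zero => simp
    | succ n ih =>
      rw [pow_succ, ih, smul_mul_assoc, vecMulVec_mul_vecMulVec, vecMulVec_smul, smul_smul,
        pow_succ]
  obtain ⟨n, rfl⟩ := Nat.exists_eq_succ_of_ne_zero hN.ne'
  rw [hpow, trace_smul, trace_vecMulVec, smul_eq_mul, dotProduct_comm v, pow_succ]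

section RankOneLimit

variable {T : Matrix ι ι L} {v l : ι → L}
  (hT : Tendsto (fun a : ℕ => T ^ a) atTop (𝓝 (vecMulVec v l)))

include hT

lemma mulVec_eq_of_tendsto_pow (hlv : l ⬝ᵥ v = 1) : T *ᵥ v = v := by
  have hcont : Continuous fun B => T * B := by fun_prop
  have hfix : T * vecMulVec v l = vecMulVec v l :=
    tendsto_nhds_unique (((hcont.tendsto _).comp hT).congr fun a => (pow_succ' T a).symm)
      (hT.comp (tendsto_add_atTop_nat 1))
  have hlim : vecMulVec v l *ᵥ v = v := by simp [vecMulVec_mulVec, hlv]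
  rw [← hlim, mulVec_mulVec, hfix]

variable (X Y : Matrix ι ι L)

lemma tendsto_dotProduct_mul_pow_mul :
    Tendsto (fun a : ℕ => l ⬝ᵥ ((Y * T ^ a * X) *ᵥ v)) atTop
      (𝓝 ((l ⬝ᵥ (Y *ᵥ v)) * (l ⬝ᵥ (X *ᵥ v)))) := by
  have hcont : Continuous fun B => l ⬝ᵥ ((Y * B * X) *ᵥ v) := by fun_prop
  have hlim : l ⬝ᵥ ((Y * vecMulVec v l * X) *ᵥ v) = (l ⬝ᵥ (Y *ᵥ v)) * (l ⬝ᵥ (X *ᵥ v)) := by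
    rw [mul_vecMulVec, vecMulVec_mul, vecMulVec_mulVec, dotProduct_mulVec l X v, dotProduct_smul]
    simp
  rw [← hlim]
  exact (hcont.tendsto _).comp hT

lemma tendsto_trace_pow_mul_pow_mul :
    Tendsto (fun p : ℕ × ℕ => (T ^ p.1 * X * T ^ p.2 * Y).trace) atTop
      (𝓝 ((l ⬝ᵥ (Y *ᵥ v)) * (l ⬝ᵥ (X *ᵥ v)))) := by
  have hlim : (vecMulVec v l * X * vecMulVec v l * Y).trace =
      (l ⬝ᵥ (Y *ᵥ v)) * (l ⬝ᵥ (X *ᵥ v)) := by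
    rw [vecMulVec_mul, vecMulVec_mul_vecMulVec, vecMulVec_mul, trace_vecMulVec, smul_vecMul,
      dotProduct_smul, smul_eq_mul, dotProduct_comm v, ← dotProduct_mulVec, ← dotProduct_mulVec,
      mul_comm]
  have htrace : Continuous (trace : Matrix ι ι L → L) := continuous_id.matrix_trace
  rw [← hlim, ← prod_atTop_atTop_eq]
  exact (htrace.tendsto _).comp <|
    (((hT.comp tendsto_fst).mul_const X).mul (hT.comp tendsto_snd)).mul_const Y

/-- For fixed `a`, the words `T ^ a X T ^ (s - a) Y` converge to a matrix of rank one. -/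
lemma tendsto_trace_pow_mul_pow_sub_mul_pow {N : ℕ} (hN : 0 < N) (a : ℕ) :
    Tendsto (fun s : ℕ => ((T ^ a * X * T ^ (s - a) * Y) ^ N).trace) atTop
      (𝓝 ((l ⬝ᵥ ((Y * T ^ a * X) *ᵥ v)) ^ N)) := by
  have hcont : Continuous fun B => ((T ^ a * X * B * Y) ^ N).trace := by fun_prop
  have hlim : ((T ^ a * X * vecMulVec v l * Y) ^ N).trace =
      (l ⬝ᵥ ((Y * T ^ a * X) *ᵥ v)) ^ N := by
    rw [mul_vecMulVec, vecMulVec_mul, trace_vecMulVec_pow _ _ hN, ← dotProduct_mulVec,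
      mulVec_mulVec, ← Matrix.mul_assoc]
  rw [← hlim]
  exact ((hcont.tendsto _).comp hT).comp (tendsto_sub_atTop_nat a)

attribute [local instance] Matrix.linftyOpNormedRing in
lemma exists_linfty_opNorm_pow_mul_pow_mul_le : ∃ K : ℝ, ∀ a b, ‖T ^ a * X * T ^ b * Y‖ ≤ K := by
  obtain ⟨K, hK⟩ := (Metric.isBounded_range_of_tendsto _ hT).exists_norm_le
  have hK' (a : ℕ) : ‖T ^ a‖ ≤ K := hK _ ⟨a, rfl⟩
  have hK0 : 0 ≤ K := (norm_nonneg _).trans (hK' 0)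
  refine ⟨K * ‖X‖ * K * ‖Y‖, fun a b => ?_⟩
  calc ‖T ^ a * X * T ^ b * Y‖ ≤ ‖T ^ a‖ * ‖X‖ * ‖T ^ b‖ * ‖Y‖ :=
        (norm_mul_le _ _).trans (mul_le_mul_of_nonneg_right
          (norm_mul₃_le ..) (norm_nonneg _))
    _ ≤ K * ‖X‖ * K * ‖Y‖ := by gcongr <;> exact hK' _

attribute [local instance] Matrix.linftyOpNormedRing Matrix.linftyOpNormedSpace in
lemma exists_norm_dominantEigenvalue_bounds [IsAlgClosed L] (hX : l ⬝ᵥ (X *ᵥ v) ≠ 0)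
    (hY : l ⬝ᵥ (Y *ᵥ v) ≠ 0) :
    ∃ c q : ℝ, 0 < c ∧ ∃ a₀, ∀ a ≥ a₀, ∀ b ≥ a₀, ∀ t μ : L,
      IsDominantEigenvalue (t • (T ^ a * X * T ^ b * Y)) μ →
        c * ‖t‖ ≤ ‖μ‖ ∧ ‖μ‖ ≤ q * (c * ‖t‖) := by
  have hpos : 0 < ‖(l ⬝ᵥ (Y *ᵥ v)) * (l ⬝ᵥ (X *ᵥ v))‖ := norm_pos_iff.2 (mul_ne_zero hY hX)
  set w := ‖(l ⬝ᵥ (Y *ᵥ v)) * (l ⬝ᵥ (X *ᵥ v))‖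
  have : Nonempty ι := by
    by_contra h
    rw [not_nonempty_iff] at h
    exact hX (by simp)
  have hcard : (0 : ℝ) < Fintype.card ι := Nat.cast_pos.2 Fintype.card_pos
  obtain ⟨K, hK⟩ := exists_linfty_opNorm_pow_mul_pow_mul_le hT X Y
  obtain ⟨a₀, ha₀⟩ : ∃ a₀ : ℕ, ∀ a ≥ a₀, ∀ b ≥ a₀, w / 2 ≤ ‖(T ^ a * X * T ^ b * Y).trace‖ := by
    obtain ⟨⟨a₁, a₂⟩, h⟩ := eventually_atTop.1 <|
      (tendsto_trace_pow_mul_pow_mul hT X Y).norm.eventually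
        (eventually_ge_nhds (half_lt_self hpos))
    exact ⟨max a₁ a₂, fun a ha b hb =>
      h (a, b) ⟨(le_max_left _ _).trans ha, (le_max_right _ _).trans hb⟩⟩
  set c := w / 2 / Fintype.card ι
  have hc : 0 < c := by positivity
  refine ⟨c, K / c, hc, a₀, fun a ha b hb t μ hμ => ⟨?_, ?_⟩⟩
  · rw [div_mul_eq_mul_div, div_le_iff₀' hcard]
    refine le_trans ?_ hμ.norm_trace_le
    rw [trace_smul, norm_smul, mul_comm]
    gcongr
    exact ha₀ a ha b hb
  · refine hμ.norm_le_linfty_opNorm.trans ?_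
    rw [norm_smul, ← mul_assoc, div_mul_cancel₀ K hc.ne', mul_comm]
    gcongr
    exact hK a b

end RankOneLimit

/-- `A` is *proximal*, with attracting direction `v` and repelling hyperplane `ker l`: the
normalised powers of `A` converge to the projection `v lᵀ`, and the eigenvalue `lam` at `v` has
modulus greater than `1`. -/
structure IsProximal (A : Matrix ι ι L) (lam : L) (v l : ι → L) : Prop where
  one_lt_norm : 1 < ‖lam‖
  dotProduct_eq_one : l ⬝ᵥ v = 1
  tendsto_pow : Tendsto (fun a : ℕ => (lam⁻¹ • A) ^ a) atTop (𝓝 (vecMulVec v l))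

namespace IsProximal

variable {G : Type*} [Group G] {ρ : G →* Matrix ι ι L} {g : G} {lam : L} {v l : ι → L}

lemma ne_zero {A : Matrix ι ι L} (hA : IsProximal A lam v l) : lam ≠ 0 :=
  norm_pos_iff.1 (zero_lt_one.trans hA.one_lt_norm)

lemma nonempty {A : Matrix ι ι L} (hA : IsProximal A lam v l) : Nonempty ι := by
  by_contra h
  rw [not_nonempty_iff] at h
  simpa using hA.dotProduct_eq_one

lemma mulVec_eq {A : Matrix ι ι L} (hA : IsProximal A lam v l) : A *ᵥ v = lam • v := by
  have h := mulVec_eq_of_tendsto_pow hA.tendsto_pow hA.dotProduct_eq_one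
  rw [smul_mulVec] at h
  rw [← h, smul_inv_smul₀ hA.ne_zero, h]

variable (hg : IsProximal (ρ g) lam v l) {C : Finset G} {N : ℕ} (hC : CoversPowers C N)

include hg

lemma map_word (a b : ℕ) (x y : G) : ρ (g ^ a * x * g ^ b * y) =
    lam ^ (a + b) • ((lam⁻¹ • ρ g) ^ a * ρ x * (lam⁻¹ • ρ g) ^ b * ρ y) := by
  have h (n : ℕ) : ρ g ^ n = lam ^ n • (lam⁻¹ • ρ g) ^ n := by
    rw [← smul_pow, smul_inv_smul₀ hg.ne_zero]
  simp only [map_mul, map_pow, h, smul_mul_assoc, mul_smul_comm, smul_smul, pow_add,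
    mul_comm (lam ^ b)]

include hC

/-- All the words `g ^ a x g ^ (s - a) y` have spectral radius comparable to `‖lam‖ ^ s`, so the
normalised traces of their `N`-th powers take boundedly many values for each `s`. -/
lemma exists_finite_range_dotProduct_pow [IsAlgClosed L] {x y : G} (hx : l ⬝ᵥ (ρ x *ᵥ v) ≠ 0)
    (hy : l ⬝ᵥ (ρ y *ᵥ v) ≠ 0) :
    ∃ a₀, (Set.range fun a =>
      (l ⬝ᵥ ((ρ y * (lam⁻¹ • ρ g) ^ (a + a₀) * ρ x) *ᵥ v)) ^ N).Finite := by
  have := hg.nonempty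
  obtain ⟨c, q, hc, a₀, hbounds⟩ :=
    exists_norm_dominantEigenvalue_bounds hg.tendsto_pow (ρ x) (ρ y) hx hy
  obtain ⟨m, hm⟩ := hC.exists_card_trace_pow_le ρ q
  refine ⟨a₀, finite_range_of_tendsto_of_card_le (m := m) (fun a =>
    tendsto_trace_pow_mul_pow_sub_mul_pow hg.tendsto_pow (ρ x) (ρ y) hC.pos (a + a₀)) fun S => ?_⟩
  have hlarge : ∀ᶠ s : ℕ in atTop, 1 < c * ‖lam‖ ^ s :=
    ((tendsto_pow_atTop_atTop_of_one_lt hg.one_lt_norm).const_mul_atTop hc).eventually_gt_atTop 1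
  have hS : ∀ᶠ s in atTop, ∀ a ∈ S, a + a₀ + a₀ ≤ s :=
    (Finset.eventually_all S).2 fun a _ => eventually_ge_atTop _
  filter_upwards [hlarge, hS] with s hs hSs
  classical
  obtain ⟨V, hV, hmem⟩ := hm _ hs
  refine ⟨V.image fun z => (lam ^ (s * N))⁻¹ * z, Finset.card_image_le.trans hV, fun a ha => ?_⟩
  have hword := hg.map_word (a + a₀) (s - (a + a₀)) x y
  rw [Nat.add_sub_cancel' (show a + a₀ ≤ s by have := hSs a ha; omega)] at hword
  obtain ⟨μ, hμ⟩ := exists_isDominantEigenvalue (ρ (g ^ (a + a₀) * x * g ^ (s - (a + a₀)) * y))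
  obtain ⟨hle, hge⟩ := hbounds (a + a₀) (by omega) (s - (a + a₀))
    (by have := hSs a ha; omega) (lam ^ s) μ (hword ▸ hμ)
  rw [norm_pow] at hle hge
  refine Finset.mem_image.2 ⟨_, hmem _ μ hμ hle hge, ?_⟩
  rw [hword, smul_pow, trace_smul, ← pow_mul, smul_eq_mul,
    inv_mul_cancel_left₀ (pow_ne_zero _ hg.ne_zero)]

/-- The sequence `l (y (g / lam) ^ a x v)` takes finitely many values and converges, so it is
eventually constant; as a linear recurrence sequence it then has this value at `a = 0` too. -/
lemma dotProduct_map_mul [IsAlgClosed L] {x y : G} (hx : l ⬝ᵥ (ρ x *ᵥ v) ≠ 0)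
    (hy : l ⬝ᵥ (ρ y *ᵥ v) ≠ 0) :
    l ⬝ᵥ (ρ (y * x) *ᵥ v) = (l ⬝ᵥ (ρ y *ᵥ v)) * (l ⬝ᵥ (ρ x *ᵥ v)) := by
  classical
  set T := lam⁻¹ • ρ g
  set χx := l ⬝ᵥ (ρ x *ᵥ v)
  obtain ⟨a₀, hpow⟩ := hg.exists_finite_range_dotProduct_pow hC hx hy
  have hfin : (Set.range fun a => l ⬝ᵥ ((ρ y * T ^ (a + a₀) * ρ x) *ᵥ v)).Finite := by
    have hroots (z : L) : ((fun t : L => t ^ N) ⁻¹' {z}).Finite :=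
      (Polynomial.nthRoots N z).toFinset.finite_toSet.subset fun t ht => by
        simpa [Polynomial.mem_nthRoots hC.pos] using ht
    refine (hpow.preimage' fun z _ => hroots z).subset ?_
    rintro _ ⟨a, rfl⟩
    exact ⟨a, rfl⟩
  have hconst := eventually_eq_of_finite_range
    ((tendsto_dotProduct_mul_pow_mul hg.tendsto_pow (ρ x) (ρ y)).comp (tendsto_add_atTop_nat a₀))
    hfin
  have hTv (a : ℕ) : T ^ a *ᵥ v = v := by
    induction a with
    | zero => simp
    | succ a ih =>
      rw [pow_succ, ← mulVec_mulVec,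
        mulVec_eq_of_tendsto_pow hg.tendsto_pow hg.dotProduct_eq_one, ih]
  have hT : IsUnit T :=
    ((Group.isUnit g).map ρ).smul (Units.mk0 lam⁻¹ (inv_ne_zero hg.ne_zero))
  have hzero : (l ᵥ* ρ y) ⬝ᵥ (ρ x *ᵥ v - χx • v) = 0 := by
    refine dual_apply_eq_zero_of_eventually_pow (T := toLinAlgEquiv' T)
      (l := dotProductBilin L L (l ᵥ* ρ y)) (mulVec_injective_of_isUnit hT) ?_
    filter_upwards [(tendsto_sub_atTop_nat a₀).eventually hconst, eventually_ge_atTop a₀]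
      with a ha haa₀
    simp only [Function.comp_apply, Nat.sub_add_cancel haa₀] at ha
    rw [← map_pow, toLinAlgEquiv'_apply, dotProductBilin_apply_apply, ← dotProduct_mulVec,
      mulVec_mulVec, mulVec_sub, mulVec_smul, mulVec_mulVec, dotProduct_sub, ha, dotProduct_smul,
      ← mulVec_mulVec, hTv, smul_eq_mul, mul_comm, sub_self]
  rw [map_mul, ← mulVec_mulVec, dotProduct_mulVec, ← sub_eq_zero, ← hzero, dotProduct_sub,
    dotProduct_smul, ← dotProduct_mulVec l (ρ y) v, smul_eq_mul, mul_comm χx]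

end IsProximal

end Proximal

section WeakConvergence

open Filter Topology Matrix

variable {L V : Type*} [NormedField L] [AddCommGroup V] [Module L V] [FiniteDimensional L V]
  {T : Module.End L V} {l : Module.Dual L V} {v : V} {J : Set (Module.Dual L V)}
  (hJ : ∀ w, (∀ j ∈ J, j w = 0) → w = 0)
  (hT : ∀ j ∈ J, ∀ w, Tendsto (fun a : ℕ => j ((T ^ a) w)) atTop (𝓝 (l w * j v)))

include hJ hT

lemma tendsto_dual_apply_pow_of_separating (j : Module.Dual L V) (w : V) :
    Tendsto (fun a : ℕ => j ((T ^ a) w)) atTop (𝓝 (l w * j v)) := by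
  have hspan : Submodule.span L J = ⊤ := by
    have hbot : (Submodule.span L J).dualCoannihilator = ⊥ :=
      eq_bot_iff.2 fun w hw => hJ w fun j hj =>
        (Submodule.mem_dualCoannihilator w).1 hw j (Submodule.subset_span hj)
    rw [← Subspace.dualCoannihilator_dualAnnihilator_eq (W := Submodule.span L J), hbot,
      Submodule.dualAnnihilator_bot]
  have hj : j ∈ Submodule.span L J := hspan ▸ Submodule.mem_top
  induction hj using Submodule.span_induction with
  | mem j hj => exact hT j hj w
  | zero => simp
  | add i j _ _ hi hj =>
    simp only [LinearMap.add_apply, mul_add]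
    exact hi.add hj
  | smul c j _ hj =>
    simp only [LinearMap.smul_apply, smul_eq_mul, mul_left_comm (l w) c]
    exact hj.const_mul c

lemma tendsto_toMatrixAlgEquiv_pow {ι : Type*} [Fintype ι] [DecidableEq ι]
    (b : Module.Basis ι L V) :
    Tendsto (fun a : ℕ => LinearMap.toMatrixAlgEquiv b T ^ a) atTop
      (𝓝 (vecMulVec (b.repr v) (l ∘ b))) := by
  refine tendsto_pi_nhds.2 fun i => tendsto_pi_nhds.2 fun j => ?_
  simp only [← map_pow, LinearMap.toMatrixAlgEquiv_apply, vecMulVec_apply,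
    mul_comm (b.repr v i)]
  exact tendsto_dual_apply_pow_of_separating hJ hT (b.coord i) (b j)

end WeakConvergence

open Filter Topology Matrix in
theorem CoversPowers.exists_index_le_finrank_notMem_commutator {L : Type*} [NormedField L]
    [IsAlgClosed L] {G : Type*} [Group G] {C : Finset G} {N : ℕ} (hC : CoversPowers C N)
    {V : Type*} [AddCommGroup V] [Module L V] [FiniteDimensional L V] (ρ : G →* Module.End L V)
    {g : G} {lam : L} (hlam : 1 < ‖lam‖) {l : Module.Dual L V} {v : V} (hlv : l v = 1)
    {J : Set (Module.Dual L V)} (hJ : ∀ w, (∀ j ∈ J, j w = 0) → w = 0)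
    (hT : ∀ j ∈ J, ∀ w,
      Tendsto (fun a : ℕ => j (((lam⁻¹ • ρ g) ^ a) w)) atTop (𝓝 (l w * j v))) :
    ∃ M : Subgroup G, M.index ≠ 0 ∧ M.index ≤ Module.finrank L V ∧ g ∉ ⁅M, M⁆ := by
  let b := Module.finBasis L V
  let Φ := LinearMap.toMatrixAlgEquiv b
  have hdot (A : Module.End L V) (w : V) :
      (l ∘ b) ⬝ᵥ (Φ A *ᵥ b.repr w) = l (A w) := by
    rw [show Φ A *ᵥ b.repr w = b.repr (A w) from LinearMap.toMatrix_mulVec_repr b b A w]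
    conv_rhs => rw [← b.sum_repr (A w), map_sum]
    simp [dotProduct, mul_comm]
  have hg : IsProximal ((Φ : Module.End L V →* _).comp ρ g) lam (b.repr v) (l ∘ b) :=
    { one_lt_norm := hlam
      dotProduct_eq_one := by simpa [hlv] using hdot 1 v
      tendsto_pow := by simpa [Φ] using tendsto_toMatrixAlgEquiv_pow hJ hT b }
  have hmul (x y : G) (hx : l (ρ x v) ≠ 0) (hy : l (ρ y v) ≠ 0) :
      l (ρ (x * y) v) = l (ρ x v) * l (ρ y v) := by
    simp only [← hdot] at hx hy ⊢
    exact hg.dotProduct_map_mul hC hy hx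
  obtain ⟨M, hindex, hle, hM⟩ := exists_index_le_finrank_forall_mem_commutator ρ hlv hmul
  refine ⟨M, hindex, hle, fun hgM => ?_⟩
  have hgv : l (ρ g v) = lam := by
    have h := congrArg ((l ∘ b) ⬝ᵥ ·) hg.mulVec_eq
    simpa [hdot, hg.dotProduct_eq_one] using h
  exact hlam.ne' (by rw [← hgv, hM g hgM, norm_one])

/-! ### Alternating forms of dominant degree -/

section SpectralSubspace

open Module

variable {K V : Type*} [Field K] [AddCommGroup V] [Module K V]

/-- The sum of the generalised eigenspaces of `g` for the eigenvalues in `s`. -/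
def spectralSubspace (g : End K V) (s : Set K) : Submodule K V :=
  ⨆ μ ∈ s, g.maxGenEigenspace μ

lemma maxGenEigenspace_le_spectralSubspace (g : End K V) {s : Set K} {μ : K} (hμ : μ ∈ s) :
    g.maxGenEigenspace μ ≤ spectralSubspace g s :=
  le_iSup₂_of_le (f := fun μ (_ : μ ∈ s) => g.maxGenEigenspace μ) μ hμ le_rfl

lemma apply_mem_spectralSubspace {g : End K V} {s : Set K} :
    ∀ x ∈ spectralSubspace g s, g x ∈ spectralSubspace g s :=
  have hle : spectralSubspace g s ≤ (spectralSubspace g s).comap g :=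
    iSup₂_le fun μ hμ _ hx => maxGenEigenspace_le_spectralSubspace g hμ <|
      End.mapsTo_maxGenEigenspace_of_comm (Commute.refl g) μ hx
  hle

lemma isCompl_spectralSubspace_compl [IsAlgClosed K] [FiniteDimensional K V] (g : End K V)
    (s : Set K) : IsCompl (spectralSubspace g s) (spectralSubspace g sᶜ) := by
  refine ⟨g.independent_maxGenEigenspace.disjoint_biSup_biSup disjoint_compl_right, ?_⟩
  rw [codisjoint_iff, eq_top_iff, ← End.iSup_maxGenEigenspace_eq_top g]
  refine iSup_le fun μ => ?_
  by_cases hμ : μ ∈ s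
  · exact (maxGenEigenspace_le_spectralSubspace g hμ).trans le_sup_left
  · exact (maxGenEigenspace_le_spectralSubspace g hμ).trans le_sup_right

lemma mem_of_hasEigenvalue_restrict_spectralSubspace {g : End K V} {s : Set K} {μ : K}
    (hμ : End.HasEigenvalue (g.restrict (p := spectralSubspace g s) apply_mem_spectralSubspace) μ) :
    μ ∈ s := by
  by_contra hμs
  refine hμ (End.eigenspace_restrict_eq_bot _ (Disjoint.mono_left ?_
    (g.independent_maxGenEigenspace.disjoint_biSup hμs)))
  exact End.genEigenspace_le_maximal ..

lemma norm_det_eq_pow_finrank {L W : Type*} [NormedField L] [IsAlgClosed L] [AddCommGroup W]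
    [Module L W] [FiniteDimensional L W] {g : End L W} {r : ℝ}
    (hr : ∀ μ, g.HasEigenvalue μ → ‖μ‖ = r) : ‖LinearMap.det g‖ = r ^ finrank L W := by
  have hroot : ∀ μ ∈ g.charpoly.roots, ‖μ‖ = r := fun μ hμ =>
    hr μ ((End.hasEigenvalue_iff_isRoot_charpoly g μ).2 (Polynomial.isRoot_of_mem_roots hμ))
  rw [End.det_eq_prod_roots_charpoly_of_splits (IsAlgClosed.splits _)]
  calc ‖g.charpoly.roots.prod‖ = (g.charpoly.roots.map fun μ => ‖μ‖).prod :=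
        map_multiset_prod (normHom (α := L)) _
    _ = r ^ g.charpoly.roots.card := by
        rw [Multiset.map_congr rfl hroot, Multiset.map_const', Multiset.prod_replicate]
    _ = r ^ finrank L W := by rw [IsAlgClosed.card_roots_eq_natDegree, LinearMap.charpoly_natDegree]

end SpectralSubspace

section Growth

open Filter Topology Module

variable {L : Type*} [NormedField L]

section NormedSpace

variable {V : Type*} [NormedAddCommGroup V] [NormedSpace L V] (g : End L V)

/-- The vectors whose orbit under the powers of `g` has exponential growth rate at most `R`. -/
def growthSubmodule (R : ℝ) : Submodule L V where
  carrier := {x | ∃ c : ℝ, 0 ≤ c ∧ ∀ a : ℕ, ‖(g ^ a) x‖ ≤ c * R ^ a}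
  add_mem' := by
    rintro x y ⟨c, hc, hx⟩ ⟨c', hc', hy⟩
    refine ⟨c + c', by positivity, fun a => ?_⟩
    rw [map_add, add_mul]
    exact (norm_add_le _ _).trans (add_le_add (hx a) (hy a))
  zero_mem' := ⟨0, le_rfl, fun a => by simp⟩
  smul_mem' := by
    rintro t x ⟨c, hc, hx⟩
    refine ⟨‖t‖ * c, by positivity, fun a => ?_⟩
    rw [map_smul, norm_smul, mul_assoc]
    gcongr
    exact hx a

variable {g}

lemma mem_growthSubmodule_of_sub_smul_mem {μ : L} {R : ℝ} (hR : ‖μ‖ < R) {x : V}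
    (hx : (g - μ • 1) x ∈ growthSubmodule g R) : x ∈ growthSubmodule g R := by
  obtain ⟨c, -, h⟩ := hx
  have hR0 : 0 < R := (norm_nonneg μ).trans_lt hR
  set B := max ‖x‖ (c / (R - ‖μ‖))
  have hcB : c ≤ B * (R - ‖μ‖) := (div_le_iff₀ (sub_pos.2 hR)).1 (le_max_right _ _)
  refine ⟨B, le_max_of_le_left (norm_nonneg _), fun a => ?_⟩
  induction a with
  | zero => simp [B]
  | succ a ih =>
    have hsplit : (g ^ (a + 1)) x = μ • (g ^ a) x + (g ^ a) ((g - μ • 1) x) := by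
      rw [pow_succ]
      simp
    calc ‖(g ^ (a + 1)) x‖ ≤ ‖μ‖ * ‖(g ^ a) x‖ + ‖(g ^ a) ((g - μ • 1) x)‖ := by
          rw [hsplit, ← norm_smul]
          exact norm_add_le _ _
      _ ≤ ‖μ‖ * (B * R ^ a) + B * (R - ‖μ‖) * R ^ a := by
          gcongr
          exact (h a).trans (by gcongr)
      _ = B * R ^ (a + 1) := by ring

lemma maxGenEigenspace_le_growthSubmodule {μ : L} {R : ℝ} (hR : ‖μ‖ < R) :
    g.maxGenEigenspace μ ≤ growthSubmodule g R := by
  intro x hx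
  obtain ⟨n, hn⟩ := (End.mem_maxGenEigenspace g μ x).1 hx
  clear hx
  induction n generalizing x with
  | zero =>
    obtain rfl : x = 0 := by simpa using hn
    exact zero_mem _
  | succ n ih => exact mem_growthSubmodule_of_sub_smul_mem hR (ih (by rwa [pow_succ] at hn))

lemma spectralSubspace_le_growthSubmodule {s : Set L} {R : ℝ}
    (hR : ∀ μ ∈ s, g.HasEigenvalue μ → ‖μ‖ < R) : spectralSubspace g s ≤ growthSubmodule g R := by
  refine iSup₂_le fun μ hμ => ?_
  by_cases hev : g.HasEigenvalue μ
  · exact maxGenEigenspace_le_growthSubmodule (hR μ hμ hev)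
  · have hbot : g.maxGenEigenspace μ = ⊥ := by
      by_contra hne
      exact hev ((End.hasUnifEigenvalue_iff_hasUnifEigenvalue_one (by simp)).1 hne)
    exact hbot ▸ bot_le

end NormedSpace

variable {ι κ : Type*} [Fintype ι] [Fintype κ]

lemma exists_norm_apply_le_mul_prod_norm (f : MultilinearMap L (fun _ : κ => ι → L) L) :
    ∃ c : ℝ, 0 ≤ c ∧ ∀ x, ‖f x‖ ≤ c * ∏ i, ‖x i‖ := by
  classical
  refine ⟨∑ r : κ → ι, ‖f fun i => Pi.single (r i) 1‖, by positivity, fun x => ?_⟩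
  have hexpand : f x = ∑ r : κ → ι, (∏ i, x i (r i)) • f fun i => Pi.single (r i) 1 := by
    have hx : x = fun i => ∑ j, x i j • (Pi.single j 1 : ι → L) :=
      funext fun i => (pi_eq_sum_univ' (x i)).trans (by simp)
    conv_lhs => rw [hx, MultilinearMap.map_sum]
    exact Finset.sum_congr rfl fun r _ =>
      f.map_smul_univ (fun i => x i (r i)) fun i => Pi.single (r i) 1
  rw [hexpand, Finset.sum_mul]
  refine (norm_sum_le _ _).trans (Finset.sum_le_sum fun r _ => ?_)
  rw [norm_smul, mul_comm, norm_prod]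
  gcongr with i _
  exact norm_le_pi_norm (x i) (r i)

lemma tendsto_inv_pow_mul_apply_pow_zero (f : MultilinearMap L (fun _ : κ => ι → L) L)
    {g : End L (ι → L)} {t : κ → ℝ} (ht : ∀ i, 0 ≤ t i) {x : κ → ι → L}
    (hx : ∀ i, x i ∈ growthSubmodule g (t i)) {δ : L} (hδ : ∏ i, t i < ‖δ‖) :
    Tendsto (fun a : ℕ => δ⁻¹ ^ a * f fun i => (g ^ a) (x i)) atTop (𝓝 0) := by
  obtain ⟨c, hc, hf⟩ := exists_norm_apply_le_mul_prod_norm f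
  choose C _ hC using hx
  have hprod : 0 ≤ ∏ i, t i := Finset.prod_nonneg fun i _ => ht i
  have hδ0 : 0 < ‖δ‖ := hprod.trans_lt hδ
  have hlim : Tendsto (fun a : ℕ => (c * ∏ i, C i) * ((∏ i, t i) / ‖δ‖) ^ a) atTop (𝓝 0) := by
    simpa using (tendsto_pow_atTop_nhds_zero_of_lt_one (by positivity)
      ((div_lt_one hδ0).2 hδ)).const_mul (c * ∏ i, C i)
  refine squeeze_zero_norm (fun a => ?_) hlim
  calc ‖δ⁻¹ ^ a * f fun i => (g ^ a) (x i)‖ ≤ ‖δ‖⁻¹ ^ a * (c * ∏ i, C i * t i ^ a) := by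
        rw [norm_mul, norm_pow, norm_inv]
        gcongr
        refine (hf _).trans ?_
        gcongr with i
        exact hC i a
    _ = (c * ∏ i, C i) * ((∏ i, t i) / ‖δ‖) ^ a := by
        rw [Finset.prod_mul_distrib, Finset.prod_pow, div_pow, inv_pow]
        ring

end Growth

section DominantForm

open Filter Topology Module

lemma exists_gt_pow_mul_lt {r r' : ℝ} (hr' : r' < r) (hr : 0 < r) (n : ℕ) :
    ∃ R > r, R ^ n * r' < r ^ (n + 1) := by
  have hlt : r ^ n * r' < r ^ (n + 1) := by
    rw [pow_succ]
    gcongr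
  have hcont : Continuous fun t : ℝ => t ^ n * r' := by fun_prop
  have hev : ∀ᶠ t in 𝓝[>] r, t ^ n * r' < r ^ (n + 1) :=
    ((hcont.tendsto r).eventually (eventually_lt_nhds hlt)).filter_mono nhdsWithin_le_nhds
  obtain ⟨R, hR, hrR⟩ := (hev.and self_mem_nhdsWithin).exists
  exact ⟨R, hrR, hR⟩

lemma exists_mem_Ioo_forall_lt {s : Set ℝ} (hs : s.Finite) {r : ℝ} (hr : 0 < r)
    (h : ∀ x ∈ s, x < r) : ∃ r' ∈ Set.Ioo 0 r, ∀ x ∈ s, x < r' := by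
  have hlt : ∀ x ∈ insert 0 s, x < r := by simpa [hr] using h
  have hev : ∀ᶠ t in 𝓝[<] r, ∀ x ∈ insert 0 s, x < t :=
    (eventually_all_finite (hs.insert 0)).2 fun x hx =>
      (eventually_gt_nhds (hlt x hx)).filter_mono nhdsWithin_le_nhds
  obtain ⟨r', hr', hr'r⟩ := (hev.and self_mem_nhdsWithin).exists
  exact ⟨r', ⟨hr' 0 (Set.mem_insert _ _), hr'r⟩, fun x hx => hr' x (Set.mem_insert_of_mem _ hx)⟩

lemma prod_ite_le_pow_mul {κ : Type*} [Fintype κ] [DecidableEq κ] {r R : ℝ} (hr : 0 ≤ r)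
    (hR : r ≤ R) {s : Finset κ} {i : κ} (hi : i ∉ s) :
    ∏ j, (if j ∈ s then R else r) ≤ R ^ (Fintype.card κ - 1) * r := by
  rw [← Finset.prod_erase_mul _ _ (Finset.mem_univ i), if_neg hi]
  gcongr
  calc ∏ j ∈ Finset.univ.erase i, (if j ∈ s then R else r) ≤ ∏ _j ∈ Finset.univ.erase i, R := by
        refine Finset.prod_le_prod (fun _ _ => ?_) fun _ _ => ?_ <;> split_ifs <;> linarith
    _ = R ^ (Fintype.card κ - 1) := by
        rw [Finset.prod_const, Finset.card_erase_of_mem (Finset.mem_univ _), Finset.card_univ]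

section Det

variable {K V : Type*} [Field K] [AddCommGroup V] [Module K V] {κ : Type*} [Fintype κ]
  [DecidableEq κ]

lemma alternatingMap_apply_pow_eq_det_pow_mul (f : V [⋀^κ]→ₗ[K] K) {g : End K V}
    {p : Submodule K V} (hp : ∀ x ∈ p, g x ∈ p) (e : Basis κ K p) (w : κ → p) (a : ℕ) :
    f (fun i => (g ^ a) (w i)) =
      LinearMap.det (g.restrict hp) ^ a * (f (fun i => e i) * e.det w) := by
  have hrestrict (x : p) : (((g.restrict hp ^ a) x : p) : V) = (g ^ a) x := by
    rw [End.pow_restrict]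
    rfl
  calc f (fun i => (g ^ a) (w i))
      = f.compLinearMap p.subtype fun i => (g.restrict hp ^ a) (w i) := by
        simp [AlternatingMap.compLinearMap_apply, hrestrict]
    _ = f (fun i => e i) * e.det ((g.restrict hp ^ a) ∘ w) := by
        rw [AlternatingMap.eq_smul_basis_det e (f.compLinearMap p.subtype)]
        rfl
    _ = _ := by rw [Basis.det_comp, map_pow, mul_left_comm]

end Det

variable {L : Type*} [NormedField L] {ι : Type*} [Fintype ι]

/-- Only the component of `w` in `∏ p` contributes to the limit: the other terms in the multilinear
expansion of `f` are `O((R ^ (|κ| - 1) * r') ^ a)` for all `R > r`. -/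
lemma tendsto_inv_det_pow_mul_alternatingMap_apply_pow {g : End L (ι → L)}
    {p q : Submodule L (ι → L)} (hpq : IsCompl p q) (hp : ∀ x ∈ p, g x ∈ p) {κ : Type*}
    [Fintype κ] [DecidableEq κ] (e : Basis κ L p) {r r' : ℝ} (hr' : r' ∈ Set.Ioo 0 r)
    (hdet : ‖LinearMap.det (g.restrict hp)‖ = r ^ Fintype.card κ)
    (hpr : ∀ R > r, p ≤ growthSubmodule g R) (hqr : q ≤ growthSubmodule g r')
    (f : (ι → L) [⋀^κ]→ₗ[L] L) (w : κ → ι → L) :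
    Tendsto (fun a : ℕ => (LinearMap.det (g.restrict hp))⁻¹ ^ a * f fun i => (g ^ a) (w i)) atTop
      (𝓝 (f (fun i => e i) * e.det.compLinearMap (p.projectionOnto q hpq) w)) := by
  have hr : 0 < r := hr'.1.trans hr'.2
  set δ := LinearMap.det (g.restrict hp)
  have hδ : δ ≠ 0 := norm_pos_iff.1 (hdet ▸ pow_pos hr _)
  set π := p.projectionOnto q hpq
  set y : κ → ι → L := fun i => w i - π (w i)
  have hy (i : κ) : y i ∈ q := by
    rw [← Submodule.projectionOnto_apply_eq_zero_iff hpq, map_sub, sub_eq_zero]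
    exact (Submodule.projectionOnto_apply_left hpq _).symm
  have hexpand (a : ℕ) : δ⁻¹ ^ a * f (fun i => (g ^ a) (w i)) =
      ∑ s : Finset κ, δ⁻¹ ^ a *
        f (fun i => (g ^ a) (s.piecewise (fun i => (π (w i) : ι → L)) y i)) := by
    rw [← Finset.mul_sum]
    have hw : w = (fun i => (π (w i) : ι → L)) + y := (add_sub_cancel _ _).symm
    conv_lhs => rw [hw]
    exact congrArg _ ((f.compLinearMap (g ^ a)).toMultilinearMap.map_add_univ _ y)
  rw [show f (fun i => e i) * e.det.compLinearMap π w = ∑ s : Finset κ,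
    if s = Finset.univ then f (fun i => e i) * e.det.compLinearMap π w else 0 by simp]
  simp only [hexpand]
  refine tendsto_finsetSum _ fun s _ => ?_
  by_cases hs : s = Finset.univ
  · rw [if_pos hs, hs]
    refine tendsto_const_nhds.congr fun a => ?_
    rw [Finset.piecewise_univ, alternatingMap_apply_pow_eq_det_pow_mul f hp e (fun i => π (w i)),
      inv_pow, inv_mul_cancel_left₀ (pow_ne_zero _ hδ)]
    rfl
  · rw [if_neg hs]
    obtain ⟨i₀, hi₀⟩ : ∃ i, i ∉ s := by simpa [Finset.eq_univ_iff_forall] using hs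
    obtain ⟨R, hrR, hR⟩ := exists_gt_pow_mul_lt hr'.2 hr (Fintype.card κ - 1)
    rw [Nat.sub_add_cancel (Fintype.card_pos_iff.2 ⟨i₀⟩), ← hdet] at hR
    refine tendsto_inv_pow_mul_apply_pow_zero f.toMultilinearMap
      (t := fun i => if i ∈ s then R else r') (fun i => ?_) (fun i => ?_) (lt_of_le_of_lt ?_ hR)
    · split_ifs <;> linarith [hr'.1]
    · by_cases hi : i ∈ s
      · simpa [hi] using hpr R hrR (π (w i)).2
      · simpa [hi] using hqr (hy i)
    · exact prod_ite_le_pow_mul hr'.1.le (hr'.2.trans hrR).le hi₀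

lemma exists_dominant_alternatingMap [IsAlgClosed L] {g : End L (ι → L)} {μ₀ : L}
    (hμ₀ : g.HasEigenvalue μ₀) (h1 : 1 < ‖μ₀‖) :
    ∃ k ≤ Fintype.card ι, ∃ lam : L, 1 < ‖lam‖ ∧
      ∃ (v : (ι → L) [⋀^Fin k]→ₗ[L] L) (e : Fin k → ι → L), v e = 1 ∧
        ∀ (f : (ι → L) [⋀^Fin k]→ₗ[L] L) (w : Fin k → ι → L),
          Tendsto (fun a : ℕ => lam⁻¹ ^ a * f fun i => (g ^ a) (w i)) atTop (𝓝 (f e * v w)) := by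
  have hfin : {μ | g.HasEigenvalue μ}.Finite := End.finite_hasEigenvalue g
  obtain ⟨μ₁, hμ₁, hmax⟩ := Set.exists_max_image _ (‖·‖) hfin ⟨μ₀, hμ₀⟩
  have hr1 : 1 < ‖μ₁‖ := h1.trans_le (hmax μ₀ hμ₀)
  let s : Set L := {μ | ‖μ‖ = ‖μ₁‖}
  obtain ⟨r', hr', hlt⟩ := exists_mem_Ioo_forall_lt
    ((hfin.inter_of_left sᶜ).image (‖·‖)) (zero_lt_one.trans hr1) (by
      rintro _ ⟨μ, ⟨hμ, hμs⟩, rfl⟩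
      exact lt_of_le_of_ne (hmax μ hμ) hμs)
  let p := spectralSubspace g s
  let q := spectralSubspace g sᶜ
  have hpq : IsCompl p q := isCompl_spectralSubspace_compl g s
  have hp : ∀ x ∈ p, g x ∈ p := apply_mem_spectralSubspace
  have hdet : ‖LinearMap.det (g.restrict hp)‖ = ‖μ₁‖ ^ finrank L p :=
    norm_det_eq_pow_finrank fun _ => mem_of_hasEigenvalue_restrict_spectralSubspace
  have hpos : finrank L p ≠ 0 := by
    obtain ⟨x, hx⟩ := hμ₁.exists_hasEigenvector
    have hxp : x ∈ p := maxGenEigenspace_le_spectralSubspace g (show μ₁ ∈ s from rfl)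
      (End.genEigenspace_le_maximal g μ₁ 1 hx.1)
    exact (finrank_pos_iff_exists_ne_zero.2 ⟨⟨x, hxp⟩, fun h => hx.2 (congrArg Subtype.val h)⟩).ne'
  let e := finBasis L p
  refine ⟨finrank L p, by simpa using Submodule.finrank_le p, _, hdet ▸ one_lt_pow₀ hr1 hpos,
    e.det.compLinearMap (p.projectionOnto q hpq), fun i => e i, ?_, fun f w =>
      tendsto_inv_det_pow_mul_alternatingMap_apply_pow hpq hp e hr' (by simpa using hdet)
        (fun R hR => spectralSubspace_le_growthSubmodule fun μ hμ _ => lt_of_eq_of_lt hμ hR)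
        (spectralSubspace_le_growthSubmodule fun μ hμ hev => hlt _ ⟨μ, ⟨hev, hμ⟩, rfl⟩) f w⟩
  rw [AlternatingMap.compLinearMap_apply]
  simp only [Submodule.projectionOnto_apply_left]
  exact e.det_self

/-- The representation of `G` on alternating forms induced by its representation `σ`. -/
def alternatingRep {K V G : Type*} [Field K] [AddCommGroup V] [Module K V] [Group G]
    (σ : G →* End K V) (κ : Type*) : G →* End K (V [⋀^κ]→ₗ[K] K) where
  toFun x :=
    { toFun f := f.compLinearMap (σ x⁻¹)
      map_add' _ _ := rfl
      map_smul' _ _ := rfl }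
  map_one' := by
    ext f w
    simp
  map_mul' x y := by
    ext f w
    simp only [mul_inv_rev, map_mul]
    rfl

lemma finiteDimensional_and_finrank_alternatingMap_le (K : Type*) [Field K] (k : ℕ) :
    FiniteDimensional K ((ι → K) [⋀^Fin k]→ₗ[K] K) ∧
      finrank K ((ι → K) [⋀^Fin k]→ₗ[K] K) ≤ Fintype.card ι ^ k := by
  classical
  let Φ : ((ι → K) [⋀^Fin k]→ₗ[K] K) →ₗ[K] (Fin k → ι) → K :=
    { toFun f t := f fun i => Pi.basisFun K ι (t i)
      map_add' _ _ := rfl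
      map_smul' _ _ := rfl }
  have hΦ : Function.Injective Φ := fun f f' h =>
    Basis.ext_alternating (Pi.basisFun K ι) fun t _ => congrFun h t
  exact ⟨.of_injective Φ hΦ, by simpa using LinearMap.finrank_le_finrank_of_injective hΦ⟩

/-- An eigenvalue of modulus greater than `1` makes `g⁻¹` proximal on alternating `k`-forms, where
`k` is the number of eigenvalues of `g` of maximal modulus. -/
theorem CoversPowers.norm_le_one_of_hasEigenvalue [IsAlgClosed L] {G : Type*} [Group G]
    {C : Finset G} {N : ℕ} (hC : CoversPowers C N) (σ : G →* End L (ι → L)) {G₀ : Subgroup G}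
    (hG₀ : ∀ M : Subgroup G, M.index ≠ 0 → M.index ≤ Fintype.card ι ^ Fintype.card ι → G₀ ≤ M)
    {g : G} (hg : g ∈ ⁅G₀, G₀⁆) {μ : L} (hμ : (σ g).HasEigenvalue μ) : ‖μ‖ ≤ 1 := by
  by_contra! hμ1
  obtain ⟨k, hk, lam, hlam, v, e, hve, hconv⟩ := exists_dominant_alternatingMap hμ hμ1
  have hι : 0 < Fintype.card ι := by
    obtain ⟨x, hx⟩ := hμ.exists_hasEigenvector
    obtain ⟨i, -⟩ := Function.ne_iff.1 hx.2
    exact Fintype.card_pos_iff.2 ⟨i⟩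
  obtain ⟨hfd, hfinrank⟩ := finiteDimensional_and_finrank_alternatingMap_le (ι := ι) L k
  let ev (w : Fin k → ι → L) : Dual L ((ι → L) [⋀^Fin k]→ₗ[L] L) :=
    { toFun f := f w
      map_add' _ _ := rfl
      map_smul' _ _ := rfl }
  have hpow (a : ℕ) (f : (ι → L) [⋀^Fin k]→ₗ[L] L) (w : Fin k → ι → L) :
      ev w (((lam⁻¹ • alternatingRep σ (Fin k) g⁻¹) ^ a) f) =
        lam⁻¹ ^ a * f fun i => (σ g ^ a) (w i) := by
    rw [smul_pow, ← map_pow, ← map_pow, ← inv_inv (g ^ a), ← inv_pow]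
    rfl
  obtain ⟨M, hM0, hM, hgM⟩ := hC.exists_index_le_finrank_notMem_commutator
    (alternatingRep σ (Fin k)) (g := g⁻¹) hlam (l := ev e) hve (J := Set.range ev)
    (fun f hf => AlternatingMap.ext fun w => hf _ ⟨w, rfl⟩) (by
      rintro _ ⟨w, rfl⟩ f
      exact (hconv f w).congr fun a => (hpow a f w).symm)
  have hle : G₀ ≤ M := hG₀ M hM0 (hM.trans (hfinrank.trans (Nat.pow_le_pow_right hι hk)))
  exact hgM (inv_mem (Subgroup.commutator_mono hle hle hg))

end DominantForm

/-! ### Absolute values detecting roots of unity -/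

section Places

open IsDedekindDomain

universe u

/-- The extension is the spectral norm on an algebraic closure of the completion. -/
lemma exists_isAlgClosed_one_lt_norm_map {k : Type u} [Field k] {v : AbsoluteValue k ℝ}
    (hv : IsNonarchimedean v) {x : k} (hx : 1 < v x) :
    ∃ (L : Type u) (_ : NormedField L) (_ : IsAlgClosed L) (τ : k →+* L), 1 < ‖τ x‖ := by
  let E := v.Completion
  have ultrametric : IsUltrametricDist E := by
    refine IsUltrametricDist.isUltrametricDist_of_forall_norm_add_le_max_norm fun a b => ?_
    induction a, b using UniformSpace.Completion.induction_on₂ with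
    | hp => exact isClosed_le (by fun_prop) (by fun_prop)
    | ih a b =>
      rw [← UniformSpace.Completion.coe_add, UniformSpace.Completion.norm_coe,
        UniformSpace.Completion.norm_coe, UniformSpace.Completion.norm_coe]
      exact hv _ _
  let toE : k →+* E := (UniformSpace.Completion.coeRingHom (α := WithAbs v)).comp
    (WithAbs.equiv v).symm.toRingHom
  have norm_toE : ‖toE x‖ = v x := UniformSpace.Completion.norm_coe _
  let nontriviallyNormed : NontriviallyNormedField E :=
    { (inferInstance : NormedField E) with non_trivial := ⟨toE x, by rwa [norm_toE]⟩ }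
  have : @IsUltrametricDist E nontriviallyNormed.toDist := ultrametric
  have : CompleteSpace E := UniformSpace.Completion.completeSpace _
  refine ⟨AlgebraicClosure E, spectralNorm.normedField E _, inferInstance,
    (algebraMap E (AlgebraicClosure E)).comp toE, ?_⟩
  change 1 < spectralNorm E (AlgebraicClosure E) (algebraMap E (AlgebraicClosure E) (toE x))
  rwa [spectralNorm_extends, norm_toE]

lemma exists_isAlgClosed_norm_map_ne_one_of_valuation_ne_one {R : Type*} {k : Type u} [CommRing R]
    [IsDedekindDomain R] [Field k] [Algebra R k] [IsFractionRing R k] (w : HeightOneSpectrum R)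
    {x : k} (hx0 : x ≠ 0) (hx : w.valuation k x ≠ 1) :
    ∃ (L : Type u) (_ : NormedField L) (_ : IsAlgClosed L) (τ : k →+* L), ‖τ x‖ ≠ 1 := by
  have one_lt_two : (1 : NNReal) < 2 := by norm_num
  set v := w.adicAbv (K := k) one_lt_two
  have hna : IsNonarchimedean v := w.isNonarchimedean_adicAbv one_lt_two
  have hvx : v x ≠ 1 := by
    change ((w.adicAbvDef (K := k) one_lt_two x : NNReal) : ℝ) ≠ 1
    rw [ne_eq, NNReal.coe_eq_one, HeightOneSpectrum.adicAbvDef,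
      ← map_one (WithZeroMulInt.toNNReal (ne_zero_of_lt one_lt_two))]
    exact (WithZeroMulInt.toNNReal_strictMono one_lt_two).injective.ne hx
  rcases lt_or_gt_of_ne hvx with h | h
  · obtain ⟨L, _, hL, τ, hτ⟩ := exists_isAlgClosed_one_lt_norm_map hna (x := x⁻¹) (by
      rw [map_inv₀]
      exact (one_lt_inv₀ (v.pos hx0)).2 h)
    rw [map_inv₀, norm_inv] at hτ
    exact ⟨L, _, hL, τ, fun h1 => by simp [h1] at hτ⟩
  · obtain ⟨L, _, hL, τ, hτ⟩ := exists_isAlgClosed_one_lt_norm_map hna h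
    exact ⟨L, _, hL, τ, hτ.ne'⟩

/-- For an algebraic integer this is Kronecker's theorem. -/
lemma exists_isAlgClosed_norm_map_ne_one_of_numberField {k : Type} [Field k] [NumberField k] {y : k}
    (hy0 : y ≠ 0) (hy : ¬ IsOfFinOrder y) :
    ∃ (L : Type) (_ : NormedField L) (_ : IsAlgClosed L) (τ : k →+* L), ‖τ y‖ ≠ 1 := by
  by_cases hyint : IsIntegral ℤ y
  · by_contra! hnorm
    obtain ⟨n, hn, hyn⟩ := NumberField.Embeddings.pow_eq_one_of_norm_eq_one k ℂ hyint
      fun τ => hnorm ℂ _ inferInstance τ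
    exact hy (isOfFinOrder_iff_pow_eq_one.2 ⟨n, hn, hyn⟩)
  · obtain ⟨w, hw⟩ : ∃ w : HeightOneSpectrum (NumberField.RingOfIntegers k),
        w.valuation k y ≠ 1 := by
      by_contra! hval
      obtain ⟨z, hz⟩ := HeightOneSpectrum.mem_integers_of_valuation_le_one k y
        fun w => (hval w).le
      exact hyint (hz ▸ z.2)
    exact exists_isAlgClosed_norm_map_ne_one_of_valuation_ne_one w hy0 hw

/-- `x` lies in a field embedding into an algebraically closed normed field, where the image of `x`
does not have norm `1`. The field is given as the image of some `k : Type`, so that the normed field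
is in `Type` as well. -/
def HasNontrivialPlace {K : Type*} [Field K] (x : K) : Prop :=
  ∃ (k : Type) (_ : Field k) (φ : k →+* K) (y : k) (L : Type) (_ : NormedField L)
    (_ : IsAlgClosed L) (τ : k →+* L), φ y = x ∧ ‖τ y‖ ≠ 1

open Polynomial in
/-- The place is the `X`-adic one of `F(X)`. -/
lemma HasNontrivialPlace.of_transcendental {F : Type} {K : Type*} [Field F] [Field K] [Algebra F K]
    {x : K} (hx : Transcendental F x) : HasNontrivialPlace x := by
  obtain ⟨L, _, hL, τ, hτ⟩ := exists_isAlgClosed_norm_map_ne_one_of_valuation_ne_one (idealX F)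
    (x := algebraMap F[X] (RatFunc F) X) (by
      simpa only [RatFunc.algebraMap_X] using RatFunc.X_ne_zero) (by
      refine ((HeightOneSpectrum.valuation_lt_one_iff_mem _ _).2 ?_).ne
      rw [idealX_span]
      exact Ideal.mem_span_singleton_self _)
  have hinj : Function.Injective (aeval x : F[X] →ₐ[F] K).toRingHom :=
    transcendental_iff_injective.1 hx
  exact ⟨RatFunc F, _, IsFractionRing.lift hinj, _, L, _, hL, τ,
    (IsFractionRing.lift_algebraMap hinj X).trans (aeval_X x), hτ⟩

lemma isOfFinOrder_of_isAlgebraic {F K : Type*} [Field F] [Finite F] [Field K] [Algebra F K]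
    {x : K} (hx0 : x ≠ 0) (hx : IsAlgebraic F x) : IsOfFinOrder x := by
  let k := IntermediateField.adjoin F {x}
  have : FiniteDimensional F k := IntermediateField.adjoin.finiteDimensional hx.isIntegral
  have : Finite k := Module.finite_of_finite F
  let y : k := ⟨x, IntermediateField.mem_adjoin_simple_self F x⟩
  have hy : y ≠ 0 := fun h => hx0 (congrArg Subtype.val h)
  exact k.val.toRingHom.toMonoidHom.isOfFinOrder (isOfFinOrder_iff_isUnit.2 (.mk0 y hy))

lemma HasNontrivialPlace.of_isAlgebraic_rat {K : Type*} [Field K] [Algebra ℚ K] {x : K}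
    (hx0 : x ≠ 0) (hx : ¬ IsOfFinOrder x) (hal : IsAlgebraic ℚ x) : HasNontrivialPlace x := by
  have : Fact (Irreducible (minpoly ℚ x)) := ⟨minpoly.irreducible hal.isIntegral⟩
  let k := AdjoinRoot (minpoly ℚ x)
  let φ : k →+* K := AdjoinRoot.lift (algebraMap ℚ K) x (minpoly.aeval ℚ x)
  let y : k := AdjoinRoot.root (minpoly ℚ x)
  have hφ : φ y = x := AdjoinRoot.lift_root _
  have : FiniteDimensional ℚ k := (AdjoinRoot.powerBasis (minpoly.ne_zero hal.isIntegral)).finite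
  have : CharZero k := charZero_of_injective_algebraMap (algebraMap ℚ k).injective
  have : NumberField k := ⟨⟩
  obtain ⟨L, _, hL, τ, hτ⟩ := exists_isAlgClosed_norm_map_ne_one_of_numberField (k := k) (y := y)
    (fun h => hx0 (by rw [← hφ, h, map_zero]))
    (fun h => hx (hφ ▸ φ.toMonoidHom.isOfFinOrder h))
  exact ⟨k, _, φ, y, L, _, hL, τ, hφ, hτ⟩

lemma HasNontrivialPlace.of_not_isOfFinOrder {K : Type*} [Field K] {x : K} (hx0 : x ≠ 0)
    (hx : ¬ IsOfFinOrder x) : HasNontrivialPlace x := by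
  obtain ⟨p, _⟩ := CharP.exists K
  rcases CharP.char_is_prime_or_zero K p with hp | rfl
  · have : Fact p.Prime := ⟨hp⟩
    let := ZMod.algebra K p
    exact .of_transcendental (F := ZMod p) fun h => hx (isOfFinOrder_of_isAlgebraic hx0 h)
  · have : CharZero K := CharP.charP_to_charZero K
    by_cases hal : IsAlgebraic ℚ x
    · exact .of_isAlgebraic_rat hx0 hx hal
    · exact .of_transcendental hal

end Places

/-! ### Specialization of linear groups -/

section Specialization

open Matrix Polynomial

variable {ι : Type*} [Fintype ι] [DecidableEq ι]

lemma exists_fg_subalgebra_mapMatrix_val_eq (k : Type*) {K M : Type*} [CommRing k] [CommRing K]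
    [Algebra k K] [Monoid M] [Monoid.FG M] (ρ : M →* Matrix ι ι K) :
    ∃ A : Subalgebra k K, A.FG ∧
      ∃ ρ' : M →* Matrix ι ι A, ∀ g, A.val.mapMatrix (ρ' g) = ρ g := by
  obtain ⟨S, hS, hfin⟩ := Monoid.fg_iff.1 ‹Monoid.FG M›
  let entries : Set K := ⋃ g ∈ S, Set.range fun ij : ι × ι => ρ g ij.1 ij.2
  let A := Algebra.adjoin k entries
  have hA : A.FG := Subalgebra.fg_def.2 ⟨entries, hfin.biUnion fun _ _ => Set.finite_range _, rfl⟩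
  have hinj : Function.Injective (A.val.mapMatrix (m := ι)) :=
    Matrix.map_injective Subtype.val_injective
  have hrange (g : M) : ρ g ∈ (A.val.mapMatrix (m := ι)).range := by
    suffices h : Submonoid.closure S ≤ (A.val.mapMatrix (m := ι)).range.toSubmonoid.comap ρ from
      h (hS ▸ Submonoid.mem_top g)
    rw [Submonoid.closure_le]
    exact fun s hs => ⟨of fun i j => ⟨ρ s i j,
      Algebra.subset_adjoin (Set.mem_biUnion hs ⟨(i, j), rfl⟩)⟩, rfl⟩
  choose ρ' hρ' using hrange
  refine ⟨A, hA,
    { toFun := ρ', map_one' := hinj ?_, map_mul' := fun a b => hinj ?_ }, hρ'⟩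
  · exact (hρ' 1).trans ((map_one ρ).trans (map_one _).symm)
  · exact (hρ' _).trans ((map_mul ρ a b).trans (by rw [map_mul, ← hρ' a, ← hρ' b]; rfl))

lemma nonempty_algHom_of_finiteType (k A L : Type*) [Field k] [CommRing A] [Nontrivial A]
    [Algebra k A] [Algebra.FiniteType k A] [Field L] [IsAlgClosed L] [Algebra k L] :
    Nonempty (A →ₐ[k] L) := by
  obtain ⟨m, hm⟩ := Ideal.exists_maximal A
  let := Ideal.Quotient.field m
  have : Algebra.FiniteType k (A ⧸ m) :=
    .of_surjective (Ideal.Quotient.mkₐ k m) (Ideal.Quotient.mkₐ_surjective k m)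
  have : Module.Finite k (A ⧸ m) := finite_of_finite_type_of_isJacobsonRing k _
  exact ⟨(IsAlgClosed.lift : A ⧸ m →ₐ[k] L).comp (Ideal.Quotient.mkₐ k m)⟩

variable {G : Type*} [Group G] {C : Finset G} {N : ℕ} {K : Type*} [Field K]

/-- A specialization of the group at a place of `k` is a representation over a normed field. -/
lemma CoversPowers.norm_algebraMap_le_one (hC : CoversPowers C N) [Group.FG G]
    (ρ : G →* Matrix ι ι K) {G₀ : Subgroup G}
    (hG₀ : ∀ M : Subgroup G, M.index ≠ 0 → M.index ≤ Fintype.card ι ^ Fintype.card ι → G₀ ≤ M)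
    {g : G} (hg : g ∈ ⁅G₀, G₀⁆) {k L : Type*} [Field k] [Algebra k K] [NormedField L]
    [IsAlgClosed L] [Algebra k L] {y : k} (hy : algebraMap k K y ∈ spectrum K (ρ g)) :
    ‖algebraMap k L y‖ ≤ 1 := by
  obtain ⟨A, hA, ρ', hρ'⟩ := exists_fg_subalgebra_mapMatrix_val_eq k ρ
  have : Algebra.FiniteType k A := A.fg_iff_finiteType.1 hA
  obtain ⟨θ⟩ := nonempty_algHom_of_finiteType k A L
  let σ : G →* Module.End L (ι → L) :=
    (toLinAlgEquiv' (R := L) (n := ι)).toAlgHom.toRingHom.toMonoidHom.comp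
      (θ.mapMatrix.toRingHom.toMonoidHom.comp ρ')
  refine hC.norm_le_one_of_hasEigenvalue σ hG₀ hg ?_
  have hroot : (ρ' g).charpoly.IsRoot (algebraMap k A y) := by
    refine .of_map (f := A.val.toRingHom) ?_ Subtype.val_injective
    rw [← hρ' g] at hy
    rw [← charpoly_map]
    exact mem_spectrum_iff_isRoot_charpoly.1 hy
  have hσ : (σ g).charpoly = (ρ' g).charpoly.map θ.toRingHom :=
    (charpoly_toLin' _).trans (charpoly_map _ _)
  rw [Module.End.hasEigenvalue_iff_isRoot_charpoly, hσ, ← θ.commutes]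
  exact hroot.map

lemma CoversPowers.isOfFinOrder_of_mem_spectrum (hC : CoversPowers C N) [Group.FG G]
    (ρ : G →* Matrix ι ι K) {G₀ : Subgroup G}
    (hG₀ : ∀ M : Subgroup G, M.index ≠ 0 → M.index ≤ Fintype.card ι ^ Fintype.card ι → G₀ ≤ M)
    {g : G} (hg : g ∈ ⁅G₀, G₀⁆) {x : K} (hx : x ∈ spectrum K (ρ g)) : IsOfFinOrder x := by
  have hx0 : x ≠ 0 := spectrum.ne_zero_of_mem_of_unit (a := ρ.toHomUnits g) hx
  have hx' : x⁻¹ ∈ spectrum K (ρ g⁻¹) := by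
    have := (spectrum.inv_mem_iff (r := Units.mk0 x hx0) (a := ρ.toHomUnits g)).1 hx
    rwa [← map_inv] at this
  by_contra hfin
  obtain ⟨k, _, φ, y, L, _, _, τ, rfl, hτ⟩ := HasNontrivialPlace.of_not_isOfFinOrder hx0 hfin
  let := φ.toAlgebra
  let := τ.toAlgebra
  have hle : ‖τ y‖ ≤ 1 := hC.norm_algebraMap_le_one ρ hG₀ hg (k := k) (L := L) hx
  have hle' : ‖τ y⁻¹‖ ≤ 1 :=
    hC.norm_algebraMap_le_one ρ hG₀ (inv_mem hg) (k := k) (L := L) (by rwa [map_inv₀])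
  have hy0 : τ y ≠ 0 := (map_ne_zero τ).2 ((map_ne_zero φ).1 hx0)
  rw [map_inv₀, norm_inv, inv_le_one₀ (norm_pos_iff.2 hy0)] at hle'
  exact hτ (le_antisymm hle hle')

end Specialization

/-! ### Unipotent elements -/

section Unipotent

/-- An element of a ring is unipotent if it differs from `1` by a nilpotent element. -/
def IsUnipotent {R : Type*} [Ring R] (x : R) : Prop :=
  IsNilpotent (x - 1)

namespace IsUnipotent

variable {R : Type*} [Ring R]

lemma one : IsUnipotent (1 : R) := by
  simp only [IsUnipotent, sub_self, IsNilpotent.zero]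

lemma pow {x : R} (hx : IsUnipotent x) (n : ℕ) : IsUnipotent (x ^ n) := by
  rw [IsUnipotent, ← mul_geom_sum]
  refine Commute.isNilpotent_mul_right ?_ hx
  exact .sum_right _ _ _ fun i _ => ((Commute.refl x).pow_right i).sub_left (.one_left _)

lemma map {S : Type*} [Ring S] (f : R →+* S) {x : R} (hx : IsUnipotent x) :
    IsUnipotent (f x) := by
  rw [IsUnipotent, ← map_one f, ← map_sub]
  exact IsNilpotent.map hx f

lemma of_map {S : Type*} [Ring S] {f : R →+* S} (hf : Function.Injective f) {x : R}
    (hx : IsUnipotent (f x)) : IsUnipotent x := by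
  rwa [IsUnipotent, ← map_one f, ← map_sub, IsNilpotent.map_iff hf] at hx

lemma map_isConj {G : Type*} [Group G] (ρ : G →* R) {g h : G} (hgh : IsConj g h)
    (hg : IsUnipotent (ρ g)) : IsUnipotent (ρ h) := by
  obtain ⟨u, rfl⟩ := isConj_iff.1 hgh
  obtain ⟨n, hn⟩ := hg
  refine ⟨n, ?_⟩
  have hconj : ρ (u * g * u⁻¹) - 1 =
      ρ.toHomUnits u * (ρ g - 1) * ((ρ.toHomUnits u)⁻¹ : Rˣ) := by
    rw [mul_sub, sub_mul, mul_one, Units.mul_inv, map_mul, map_mul]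
    rfl
  rw [hconj, Units.conj_pow, hn, mul_zero, zero_mul]

lemma map_zpow {G : Type*} [Group G] (ρ : G →* R) {g : G} (hg : IsUnipotent (ρ g)) (k : ℤ) :
    IsUnipotent (ρ (g ^ k)) := by
  have hinv : IsUnipotent (ρ g⁻¹) := by
    have h : ρ g⁻¹ - 1 = (ρ g - 1) * -ρ g⁻¹ := by
      rw [mul_neg, sub_mul, ← map_mul, mul_inv_cancel, map_one, one_mul, neg_sub]
    have hcomm : Commute (ρ g) (ρ g⁻¹) := ((Commute.refl g).inv_right).map ρ
    rw [IsUnipotent, h]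
    exact (hcomm.sub_left (.one_left _)).neg_right.isNilpotent_mul_right hg
  obtain ⟨n, rfl | rfl⟩ := k.eq_nat_or_neg
  · rw [zpow_natCast, map_pow]
    exact hg.pow n
  · rw [zpow_neg, zpow_natCast, ← inv_pow, map_pow]
    exact hinv.pow n

end IsUnipotent

/-- In characteristic `p`, the `p`-part of `E` may be removed. -/
lemma exists_cast_ne_zero_forall_isUnipotent_pow (K : Type*) {R : Type*} [Field K] [Ring R]
    [Algebra K R] {E : ℕ} (hE : E ≠ 0) :
    ∃ E' : ℕ, (E' : K) ≠ 0 ∧ ∀ x : R, IsUnipotent (x ^ E) → IsUnipotent (x ^ E') := by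
  obtain ⟨p, _⟩ := CharP.exists K
  rcases CharP.char_is_prime_or_zero K p with hp | rfl
  · have : Fact p.Prime := ⟨hp⟩
    obtain ⟨a, E', hE', rfl⟩ := Nat.exists_eq_pow_mul_and_not_dvd hE p hp.ne_one
    refine ⟨E', mt (CharP.cast_eq_zero_iff K p E').1 hE', fun x ⟨n, hn⟩ => ⟨p ^ a * n, ?_⟩⟩
    rcases subsingleton_or_nontrivial R with _ | _
    · exact Subsingleton.elim _ _
    have : CharP R p := charP_of_injective_algebraMap (algebraMap K R).injective p
    rw [pow_mul, sub_pow_char_pow_of_commute p a (.one_right _), one_pow, ← pow_mul,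
      mul_comm E', hn]
  · have : CharZero K := CharP.charP_to_charZero K
    exact ⟨E, Nat.cast_ne_zero.2 hE, fun _ => id⟩

/-- Up to conjugacy and `N`-th powers, only the finitely many elements of `C` matter. -/
lemma CoversPowers.exists_forall_isUnipotent_pow {G R : Type*} [Group G] [Ring R] {C : Finset G}
    {N : ℕ} (hC : CoversPowers C N) (ρ : G →* R) {s : Set G}
    (hs : ∀ g ∈ s, ∃ n ≠ 0, IsUnipotent (ρ g ^ n)) :
    ∃ E ≠ 0, ∀ g ∈ s, IsUnipotent (ρ g ^ E) := by
  have exponent (c : G) : ∃ e ≠ 0, (∃ n ≠ 0, IsUnipotent (ρ c ^ n)) → IsUnipotent (ρ c ^ e) := by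
    by_cases h : ∃ n ≠ 0, IsUnipotent (ρ c ^ n)
    · obtain ⟨n, hn, hcn⟩ := h
      exact ⟨n, hn, fun _ => hcn⟩
    · exact ⟨1, one_ne_zero, fun hc => absurd hc h⟩
  choose e he he' using exponent
  refine ⟨N * ∏ c ∈ C, e c, mul_ne_zero hC.pos.ne' (Finset.prod_ne_zero_iff.2 fun c _ => he c),
    fun g hg => ?_⟩
  obtain ⟨c, hc, k, hconj⟩ := hC.exists_isConj g
  rcases eq_or_ne k 0 with rfl | hk
  · rw [zpow_zero, isConj_one_right] at hconj
    rw [← map_pow, pow_mul, hconj, one_pow, map_one]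
    exact .one
  obtain ⟨n, hn, hgn⟩ := hs g hg
  have hcn : IsUnipotent (ρ c ^ (k.natAbs * n)) := by
    have hgNn : IsUnipotent (ρ ((g ^ N) ^ n)) := by
      rw [pow_right_comm, map_pow, map_pow]
      exact hgn.pow N
    rw [← map_pow, ← zpow_natCast, Nat.cast_mul, ← Int.mul_sign_self,
      mul_right_comm, zpow_mul, zpow_mul, zpow_natCast]
    exact (hgNn.map_isConj ρ (hconj.pow n).symm).map_zpow ρ k.sign
  have hce : IsUnipotent (ρ (c ^ e c)) := by
    rw [map_pow]
    exact he' c ⟨_, mul_ne_zero (Int.natAbs_ne_zero.2 hk) hn, hcn⟩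
  obtain ⟨q, hq⟩ := Finset.dvd_prod_of_mem e hc
  have hcprod : IsUnipotent (ρ ((c ^ k) ^ ∏ c ∈ C, e c)) := by
    rw [hq, ← zpow_natCast, ← zpow_mul, Nat.cast_mul, mul_left_comm, zpow_mul, zpow_natCast]
    exact hce.map_zpow ρ _
  rw [← map_pow, pow_mul]
  exact hcprod.map_isConj ρ (hconj.pow _)

section Matrix

open Matrix Polynomial

variable {ι : Type*} [Fintype ι] [DecidableEq ι]

lemma exists_isUnipotent_pow_of_forall_mem_spectrum {K : Type*} [Field K] [IsAlgClosed K]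
    (M : Matrix ι ι K) (hM : ∀ x ∈ spectrum K M, IsOfFinOrder x) :
    ∃ n ≠ 0, IsUnipotent (M ^ n) := by
  have hroots (x : K) (hx : x ∈ M.charpoly.roots) : IsOfFinOrder x :=
    hM x (mem_spectrum_iff_isRoot_charpoly.2 (isRoot_of_mem_roots hx))
  refine ⟨(M.charpoly.roots.map orderOf).prod, fun h0 => ?_, M.charpoly.roots.card, ?_⟩
  · obtain ⟨x, hx, hx0⟩ := Multiset.mem_map.1 (Multiset.prod_eq_zero_iff.1 h0)
    exact (hroots x hx).orderOf_pos.ne' hx0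
  set n := (M.charpoly.roots.map orderOf).prod
  have hdvd : M.charpoly ∣ (X ^ n - 1) ^ M.charpoly.roots.card := by
    conv_lhs => rw [(IsAlgClosed.splits M.charpoly).eq_prod_roots_of_monic M.charpoly_monic]
    rw [← Multiset.prod_replicate, ← Multiset.map_const']
    refine Multiset.prod_dvd_prod_of_dvd _ _ fun x hx => dvd_iff_isRoot.2 ?_
    have hxn : x ^ n = 1 :=
      orderOf_dvd_iff_pow_eq_one.1 (Multiset.dvd_prod (Multiset.mem_map_of_mem orderOf hx))
    rw [IsRoot.def, eval_sub, eval_pow, eval_X, eval_one, hxn, sub_self]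
  obtain ⟨q, hq⟩ := hdvd
  simpa [M.aeval_self_charpoly] using congrArg (aeval M) hq

/-- The matrix `1 + M + ⋯ + M ^ (E - 1)` is congruent to the scalar `E` modulo `m`, hence is not a
zero divisor, and its product with `M - 1` is `M ^ E - 1`. -/
lemma isUnipotent_of_isUnipotent_pow {A : Type*} [CommRing A] [IsDomain A] {m : Ideal A}
    [m.IsPrime] {M : Matrix ι ι A} (hM : (Ideal.Quotient.mk m).mapMatrix M = 1) {E : ℕ}
    (hE : (E : A) ∉ m) (hME : IsUnipotent (M ^ E)) : IsUnipotent M := by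
  obtain ⟨n, hn⟩ := hME
  let S := ∑ i ∈ Finset.range E, M ^ i
  have hdet : S.det ≠ 0 := by
    intro h
    have hS : (Ideal.Quotient.mk m).mapMatrix S = (E : Matrix ι ι (A ⧸ m)) := by
      simp [S, hM, -RingHom.mapMatrix_apply]
    have hdetS := RingHom.map_det (Ideal.Quotient.mk m) S
    rw [h, hS, map_zero, ← diagonal_natCast, det_diagonal, Finset.prod_const] at hdetS
    refine pow_ne_zero _ (fun hE0 => hE ?_) hdetS.symm
    rwa [← map_natCast (Ideal.Quotient.mk m), Ideal.Quotient.eq_zero_iff_mem] at hE0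
  have hcomm : Commute (M - 1) S :=
    .sum_right _ _ _ fun i _ => ((Commute.refl M).pow_right i).sub_left (.one_left _)
  rw [← mul_geom_sum, hcomm.mul_pow] at hn
  have hsmul : (S ^ n).det • (M - 1) ^ n = 0 := by
    rw [← mul_one ((M - 1) ^ n), ← mul_smul_comm, ← mul_adjugate, ← mul_assoc, hn, zero_mul]
  rw [det_pow] at hsmul
  exact ⟨n, (smul_eq_zero.1 hsmul).resolve_left (pow_ne_zero n hdet)⟩

end Matrix

end Unipotent

/-! ### Derived length of unipotent groups -/

section Kolchin

lemma invariants_ne_bot_of_isPGroup {p : ℕ} [Fact p.Prime] {F U V : Type*} [Field F] [CharP F p]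
    [Group U] (hU : IsPGroup p U) [AddCommGroup V] [Module F V] [Finite V] [Nontrivial V]
    (σ : Representation F U V) : σ.invariants ≠ ⊥ := by
  have hdvd : p ∣ Nat.card V := by
    obtain ⟨v, hv⟩ := exists_ne (0 : V)
    have hp : p • v = 0 := by rw [← Nat.cast_smul_eq_nsmul F, CharP.cast_eq_zero, zero_smul]
    exact addOrderOf_eq_prime hp hv ▸ addOrderOf_dvd_natCard v
  let _ : MulAction U V := MulAction.compHom V σ
  obtain ⟨v, hv, hv0⟩ := hU.exists_fixed_point_of_prime_dvd_card_of_fixed_point V hdvd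
    (a := 0) fun u => map_zero (σ u)
  exact σ.invariants.ne_bot_iff.2 ⟨v, hv, hv0.symm⟩

/-- If the `n`-th derived subgroup acts trivially on the quotient by the invariants `W`, then its
elements `u` and `v` satisfy `(v - 1) (u - 1) = 0` and `(u - 1) (v - 1) = 0`, so they commute as
endomorphisms. -/
lemma derivedSeries_le_ker_of_isPGroup {p : ℕ} [Fact p.Prime] {F U V : Type*} [Field F] [CharP F p]
    [Group U] (hU : IsPGroup p U) [AddCommGroup V] [Module F V] [Finite V] {n : ℕ}
    (σ : Representation F U V) (hn : Module.finrank F V ≤ n) : derivedSeries U n ≤ σ.ker := by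
  induction n generalizing V with
  | zero =>
    have : Subsingleton V := Module.finrank_zero_iff.1 (Nat.le_zero.1 hn)
    exact fun u _ => Subsingleton.elim (σ u) 1
  | succ n ih =>
    rcases subsingleton_or_nontrivial V with _ | _
    · exact fun u _ => Subsingleton.elim (σ u) 1
    have hle (u : U) : σ.invariants ≤ σ.invariants.comap (σ u) := fun v hv =>
      Submodule.mem_comap.2 ((hv u).symm ▸ hv)
    have : Finite (V ⧸ σ.invariants) := .of_surjective _ σ.invariants.mkQ_surjective
    have hrank : Module.finrank F (V ⧸ σ.invariants) ≤ n := by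
      have hpos : 0 < Module.finrank F σ.invariants := Module.finrank_pos_iff.2
        (Submodule.nontrivial_iff_ne_bot.2 (invariants_ne_bot_of_isPGroup hU σ))
      have := σ.invariants.finrank_quotient_add_finrank
      lia
    have hsub (u : U) (hu : u ∈ derivedSeries U n) (x : V) : σ u x - x ∈ σ.invariants :=
      (Submodule.Quotient.eq _).1
        (LinearMap.congr_fun (ih (σ.quotient _ hle) hrank hu) (Submodule.Quotient.mk x))
    rw [derivedSeries_succ, Subgroup.commutator_le]
    intro u hu v hv
    have hcomm : σ (u * v) = σ (v * u) := by
      ext x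
      have huv := hsub u hu x v
      have hvu := hsub v hv x u
      rw [map_sub, sub_eq_iff_eq_add] at huv hvu
      rw [map_mul, map_mul, Module.End.mul_apply, Module.End.mul_apply, huv, hvu]
      abel
    rw [MonoidHom.mem_ker, commutatorElement_def, mul_assoc, ← mul_inv_rev, map_mul, hcomm,
      ← map_mul, mul_inv_cancel, map_one]

section Matrix

variable {ι U : Type*} [Fintype ι] [DecidableEq ι] [Group U]

/-- Over a finite field of characteristic `p`, unipotent matrices have `p`-power order. -/
lemma derivedSeries_le_ker_of_forall_isUnipotent_of_finite {F : Type*} [Field F] [Finite F]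
    (ρ : U →* Matrix ι ι F) (hρ : ∀ u, IsUnipotent (ρ u)) :
    derivedSeries U (Fintype.card ι) ≤ ρ.ker := by
  obtain ⟨p, hp⟩ := CharP.exists F
  have : Fact p.Prime := ⟨(CharP.char_is_prime_or_zero F p).resolve_right
    (CharP.char_ne_zero_of_finite F p)⟩
  let P := ρ.toHomUnits.range
  have hP : IsPGroup p P := by
    rintro ⟨_, u, rfl⟩
    rcases isEmpty_or_nonempty ι with _ | _
    · exact ⟨0, Subsingleton.elim _ _⟩
    obtain ⟨n, hn⟩ := hρ u
    refine ⟨n, Subtype.ext (Units.ext ?_)⟩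
    have hpn : (ρ u - 1) ^ p ^ n = 0 :=
      pow_eq_zero_of_le (Nat.lt_pow_self (Fact.out (p := p.Prime)).one_lt).le hn
    rwa [sub_pow_char_pow_of_commute p n (.one_right _), one_pow, sub_eq_zero] at hpn
  let σ : Representation F P (ι → F) :=
    (Matrix.toLinAlgEquiv' : Matrix ι ι F ≃ₐ[F] _).toMonoidHom.comp
      ((Units.coeHom _).comp P.subtype)
  intro u hu
  have hσ := derivedSeries_le_ker_of_isPGroup hP σ (Module.finrank_fintype_fun_eq_card F).le
    (map_derivedSeries_le_derivedSeries ρ.toHomUnits.rangeRestrict _ (Subgroup.mem_map_of_mem _ hu))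
  exact Matrix.toLinAlgEquiv'.injective (hσ.trans (map_one _).symm)

lemma derivedSeries_le_ker_of_forall_isUnipotent {A : Type*} [CommRing A] [IsReduced A]
    [Algebra.FiniteType ℤ A] (ρ : U →* Matrix ι ι A) (hρ : ∀ u, IsUnipotent (ρ u)) :
    derivedSeries U (Fintype.card ι) ≤ ρ.ker := by
  intro u hu
  by_contra hne
  obtain ⟨i, j, hij⟩ : ∃ i j, ρ u i j - (1 : Matrix ι ι A) i j ≠ 0 := by
    by_contra! h
    exact hne (Matrix.ext fun i j => sub_eq_zero.1 (h i j))
  have : IsJacobsonRing A := isJacobsonRing_of_finiteType (A := ℤ)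
  obtain ⟨m, hm, -, hmem⟩ := exists_isMaximal_notMem (P := (⊥ : Ideal A))
    Ideal.isRadical_bot hij
  let _ : Field (A ⧸ m) := Ideal.Quotient.field m
  have : Finite (A ⧸ m) := finite_quotient_of_isMaximal m
  have hker := derivedSeries_le_ker_of_forall_isUnipotent_of_finite
    ((Ideal.Quotient.mk m).mapMatrix.toMonoidHom.comp ρ)
    (fun u => (hρ u).map (Ideal.Quotient.mk m).mapMatrix) hu
  rw [MonoidHom.mem_ker, ← map_one (Ideal.Quotient.mk m).mapMatrix] at hker
  exact hmem ((Ideal.Quotient.mk_eq_mk_iff_sub_mem _ _).1 (congrFun₂ hker i j))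

end Matrix

end Kolchin

/-! ### Linear groups -/

section Linear

open Matrix

variable {ι G : Type*} [Fintype ι] [DecidableEq ι] [Group G]

lemma CoversPowers.exists_cast_ne_zero_forall_isUnipotent_pow {K : Type*} [Field K]
    [IsAlgClosed K] [Group.FG G] {C : Finset G} {N : ℕ} (hC : CoversPowers C N)
    (ρ : G →* Matrix ι ι K) {G₀ : Subgroup G}
    (hG₀ : ∀ M : Subgroup G, M.index ≠ 0 → M.index ≤ Fintype.card ι ^ Fintype.card ι → G₀ ≤ M) :
    ∃ E : ℕ, (E : K) ≠ 0 ∧ ∀ g ∈ ⁅G₀, G₀⁆, IsUnipotent (ρ g ^ E) := by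
  obtain ⟨E, hE, hunip⟩ := hC.exists_forall_isUnipotent_pow ρ (s := ↑⁅G₀, G₀⁆) fun g hg =>
    exists_isUnipotent_pow_of_forall_mem_spectrum (ρ g) fun x =>
      hC.isOfFinOrder_of_mem_spectrum ρ hG₀ hg
  obtain ⟨E', hE', hunip'⟩ :=
    _root_.exists_cast_ne_zero_forall_isUnipotent_pow K (R := Matrix ι ι K) hE
  exact ⟨E', hE', fun g hg => hunip' _ (hunip g hg)⟩

section FiniteType

variable {A : Type*} [CommRing A] [Algebra.FiniteType ℤ A]

lemma exists_finiteIndex_forall_isUnipotent_of_pow [IsDomain A] (ρ : G →* Matrix ι ι A) {E : ℕ}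
    (hE : (E : A) ≠ 0) :
    ∃ H : Subgroup G, H.FiniteIndex ∧ ∀ g ∈ H, IsUnipotent (ρ g ^ E) → IsUnipotent (ρ g) := by
  have : IsJacobsonRing A := isJacobsonRing_of_finiteType (A := ℤ)
  obtain ⟨m, hm, -, hEm⟩ := exists_isMaximal_notMem (P := (⊥ : Ideal A)) Ideal.isRadical_bot hE
  have : Finite (A ⧸ m) := finite_quotient_of_isMaximal m
  let f := ((Ideal.Quotient.mk m).mapMatrix.toMonoidHom.comp ρ).toHomUnits
  refine ⟨f.ker, inferInstance, fun g hg => isUnipotent_of_isUnipotent_pow ?_ hEm⟩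
  exact congrArg Units.val (MonoidHom.mem_ker.1 hg)

lemma isSolvable_of_forall_mem_commutator_isUnipotent [IsReduced A] {ρ : G →* Matrix ι ι A}
    (hρ : Function.Injective ρ) (hunip : ∀ g ∈ commutator G, IsUnipotent (ρ g)) :
    Group.IsSolvable G := by
  have hker : derivedSeries (commutator G) (Fintype.card ι) = ⊥ := by
    refine le_bot_iff.1 ((derivedSeries_le_ker_of_forall_isUnipotent
      (ρ.comp (commutator G).subtype) fun g => hunip g g.2).trans_eq ?_)
    exact (MonoidHom.ker_eq_bot_iff _).2 (hρ.comp Subtype.val_injective)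
  have : Group.IsSolvable (commutator G) := ⟨_, hker⟩
  refine Group.isSolvable_of_ker_le_range (commutator G).subtype (Abelianization.of (G := G)) ?_
  rw [Abelianization.ker_of, Subgroup.range_subtype]

end FiniteType

lemma bVCyc.exists_finiteIndex_isSolvable {K : Type*} [Field K] [IsAlgClosed K] [Group.FG G]
    (hb : bVCyc G) {ρ : G →* Matrix ι ι K} (hρ : Function.Injective ρ) :
    ∃ H : Subgroup G, H.FiniteIndex ∧ Group.IsSolvable H := by
  obtain ⟨C, N, hC⟩ := hb.exists_coversPowers
  obtain ⟨G₀, _, hG₀⟩ := exists_finiteIndex_le_of_index_le ‹Group.FG G›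
    (Fintype.card ι ^ Fintype.card ι)
  obtain ⟨E, hE, hunip⟩ := hC.exists_cast_ne_zero_forall_isUnipotent_pow ρ hG₀
  obtain ⟨A, hA, ρ', hρ'⟩ := exists_fg_subalgebra_mapMatrix_val_eq ℤ ρ
  have : Algebra.FiniteType ℤ A := A.fg_iff_finiteType.1 hA
  have hval : Function.Injective (A.val.toRingHom.mapMatrix (m := ι)) :=
    Matrix.map_injective Subtype.val_injective
  have hEA : (E : A) ≠ 0 := fun h => hE (by exact_mod_cast congrArg A.val h)
  obtain ⟨G₁, _, hG₁⟩ := exists_finiteIndex_forall_isUnipotent_of_pow ρ' hEA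
  have hinj : Function.Injective ρ' := fun a b hab => hρ (by rw [← hρ' a, ← hρ' b, hab])
  refine ⟨G₀ ⊓ G₁, inferInstance, isSolvable_of_forall_mem_commutator_isUnipotent
    (ρ := ρ'.comp (G₀ ⊓ G₁).subtype) (hinj.comp Subtype.val_injective)
    fun g hg => hG₁ g g.2.2 (.of_map hval ?_)⟩
  have hg₀ : (g : G) ∈ ⁅G₀, G₀⁆ := Subgroup.commutator_mono inf_le_left inf_le_left
    ((G₀ ⊓ G₁).map_subtype_commutator ▸ Subgroup.mem_map_of_mem (G₀ ⊓ G₁).subtype hg)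
  rw [map_pow]
  exact (hρ' g).symm ▸ hunip g hg₀

theorem bVCyc.virtuallyCyclic_of_injective {K : Type*} [Field K] [IsAlgClosed K] [Group.FG G]
    (hb : bVCyc G) {ρ : G →* Matrix ι ι K} (hρ : Function.Injective ρ) : VirtuallyCyclic G := by
  obtain ⟨H, hH, _⟩ := hb.exists_finiteIndex_isSolvable hρ
  exact .of_finiteIndex H
    ((hb.of_finiteIndex H).virtuallyCyclic_of_isSolvable (Subgroup.fg_of_index_ne_zero H))

end Linear

theorem stmt_0_general {ι R G : Type*} [Fintype ι] [DecidableEq ι] [CommRing R] [IsDomain R]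
    [Group G] {ρ : G →* GL ι R} (hρ : Function.Injective ρ) (hfg : Group.FG G) :
    bVCyc G ↔ VirtuallyCyclic G := by
  refine ⟨fun hb => ?_, VirtuallyCyclic.bVCyc⟩
  let φ : R →+* AlgebraicClosure (FractionRing R) :=
    (algebraMap (FractionRing R) _).comp (algebraMap R _)
  have hφ : Function.Injective φ :=
    (algebraMap (FractionRing R) _).injective.comp (IsFractionRing.injective R _)
  let σ : G →* Matrix ι ι (AlgebraicClosure (FractionRing R)) :=
    φ.mapMatrix.toMonoidHom.comp ((Units.coeHom _).comp ρ)
  have hσ : Function.Injective σ :=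
    (Matrix.map_injective hφ).comp (Units.val_injective.comp hρ)
  exact hb.virtuallyCyclic_of_injective hσ

/-- A finitely generated linear group has bVCyc if and only if it is virtually cyclic. -/
theorem stmt_0 {K : Type*} [Field K] (d : ℕ) (G : Subgroup (GL (Fin d) K))
    (hfg : Group.FG G) : bVCyc G ↔ VirtuallyCyclic G :=
  stmt_0_general G.subtype_injective hfg
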